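/- arXiv:2006.01678 — 5 statements merged into one kernel-verified Lean document; each statement's English description precedes it below -/
import Mathlib

section
/- Let X be a connected chordal bipartite graph, let α be a vertex of X, and let (Ω,S) be a coherent configuration on the vertex set Ω of X compatible with X in which α is distinguished. Then for all distinct fibers Δ and Γ of (Ω,S), ‖e_{Δ,Γ}‖ = ‖e_{Γ,Δ}‖. -/
open SimpleGraph

/-- A coherent configuration on a set `Ω`: a partition `S` of `Ω × Ω` into nonempty
binary relations such that the diagonal is a union of elements of `S`, the converse of
every element of `S` belongs to `S`, and the intersection numbers are well defined. -/
structure CoherentConfiguration (Ω : Type*) where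
  S : Set (Set (Ω × Ω))
  nonempty_mem : ∀ s ∈ S, s.Nonempty
  partition : ∀ p : Ω × Ω, ∃! s, s ∈ S ∧ p ∈ s
  diag_union : ∀ s ∈ S, (∃ p ∈ s, p.1 = p.2) → ∀ p ∈ s, p.1 = p.2
  converse_mem : ∀ s ∈ S, {p : Ω × Ω | (p.2, p.1) ∈ s} ∈ S
  regularity : ∀ r ∈ S, ∀ s ∈ S, ∀ t ∈ S, ∀ p ∈ t, ∀ q ∈ t,
    {γ : Ω | (p.1, γ) ∈ r ∧ (γ, p.2) ∈ s}.ncard =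
      {γ : Ω | (q.1, γ) ∈ r ∧ (γ, q.2) ∈ s}.ncard

/-- `Δ` is a fiber of the coherent configuration, i.e. `{(δ,δ) : δ ∈ Δ} ∈ S`. -/
def CoherentConfiguration.IsFiber {Ω : Type*} (C : CoherentConfiguration Ω)
    (Δ : Set Ω) : Prop :=
  {p : Ω × Ω | p.1 = p.2 ∧ p.1 ∈ Δ} ∈ C.S

/-- The coherent configuration is compatible with the graph `X`: the arc set of `X`
is a union of elements of `S`. -/
def CoherentConfiguration.Compatible {Ω : Type*} (C : CoherentConfiguration Ω)
    (X : SimpleGraph Ω) : Prop :=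
  ∀ s ∈ C.S, (∃ p ∈ s, X.Adj p.1 p.2) → ∀ p ∈ s, X.Adj p.1 p.2

/-- The vertex `α` is distinguished in the coherent configuration: `{(α,α)} ∈ S`. -/
def CoherentConfiguration.Distinguished {Ω : Type*} (C : CoherentConfiguration Ω)
    (α : Ω) : Prop :=
  ({(α, α)} : Set (Ω × Ω)) ∈ C.S

/-- `P`, `Q` form a bipartition of the graph `X`. -/
def IsBipartition {V : Type*} (X : SimpleGraph V) (P Q : Set V) : Prop :=
  (∀ v, v ∈ P ∨ v ∈ Q) ∧ Disjoint P Q ∧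
    ∀ u v, X.Adj u v → (u ∈ P ∧ v ∈ Q) ∨ (u ∈ Q ∧ v ∈ P)

/-- `X` contains no induced cycle of length at least 6. -/
def NoLongInducedCycle {V : Type*} (X : SimpleGraph V) : Prop :=
  ∀ n : ℕ, 6 ≤ n → IsEmpty (SimpleGraph.cycleGraph n ↪g X)

/-- The equivalence relation `e_{Δ,Γ}` on `Δ`: two vertices of `Δ` are equivalent iff
they have the same neighbors in `Γ`; viewed as a set of pairs. -/
def eRel {V : Type*} (X : SimpleGraph V) (Δ Γ : Set V) : Set (V × V) :=
  {p | p.1 ∈ Δ ∧ p.2 ∈ Δ ∧ X.neighborSet p.1 ∩ Γ = X.neighborSet p.2 ∩ Γ}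

/-- The number `‖e_{Δ,Γ}‖` of classes of the equivalence relation `e_{Δ,Γ}`,
i.e. the number of distinct sets of the form `N(δ) ∩ Γ` for `δ ∈ Δ`. -/
noncomputable def numClasses {V : Type*} (X : SimpleGraph V) (Δ Γ : Set V) : ℕ :=
  ((fun δ => X.neighborSet δ ∩ Γ) '' Δ).ncard


/-- `f 0, …, f (n-1)` is an induced path. -/
def IndPath {V : Type*} (Y : SimpleGraph V) (n : ℕ) (f : ℕ → V) : Prop :=
  (∀ i j, i < n → j < n → (Y.Adj (f i) (f j) ↔ (i + 1 = j ∨ j + 1 = i))) ∧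
  (∀ i j, i < n → j < n → f i = f j → i = j)

lemma no_cycle {V : Type*} (Y : SimpleGraph V) (hno : NoLongInducedCycle Y)
    (i n : ℕ) (hin : i + 5 ≤ n) (F : ℕ → V)
    (hadj : ∀ a b, i ≤ a → a < b → b ≤ n →
      (Y.Adj (F a) (F b) ↔ (b = a + 1 ∨ (a = i ∧ b = n))))
    (hinj : ∀ a b, a < b → b ≤ n → F a ≠ F b) : False := by
  have key : ∀ a b, a < b → a < n + 1 - i → b < n + 1 - i →
      (Y.Adj (F (i + a)) (F (i + b)) ↔ (b - a = 1 ∨ n + 1 - i - b + a = 1)) := by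
    intro a b hab ha hb
    rw [hadj _ _ (by omega) (by omega) (by omega)]
    omega
  obtain ⟨m, hm⟩ : ∃ m, n + 1 - i = m + 6 := ⟨n + 1 - i - 6, by omega⟩
  rw [hm] at key
  refine (hno (m + 6) (by omega)).false ⟨⟨fun j => F (i + j.val), ?_⟩, ?_⟩
  · intro a b hab
    by_contra hne
    have hne' : a.val ≠ b.val := fun h => hne (Fin.ext h)
    have := a.isLt
    have := b.isLt
    rcases lt_or_gt_of_ne hne' with h | h
    · exact hinj _ _ (by omega) (by omega) hab
    · exact hinj (i + b.val) (i + a.val) (by omega) (by omega) hab.symm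
  · intro a b
    have ha := a.isLt
    have hb := b.isLt
    change Y.Adj (F (i + a.val)) (F (i + b.val)) ↔ _
    rw [SimpleGraph.cycleGraph_adj']
    rcases lt_trichotomy a.val b.val with h | h | h
    · rw [key _ _ h ha hb, Fin.coe_sub_iff_lt.2 h, Fin.coe_sub_iff_le.2 h.le]
      omega
    · have : a = b := Fin.ext h
      subst this
      simp
    · rw [SimpleGraph.adj_comm, key _ _ h hb ha, Fin.coe_sub_iff_lt.2 h,
        Fin.coe_sub_iff_le.2 h.le]
      omega

lemma extend_path {V : Type*} [Finite V] (Y : SimpleGraph V) (A : Set V)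
    (hbip : ∀ u v, Y.Adj u v → (u ∈ A ↔ v ∉ A)) (hno : NoLongInducedCycle Y)
    (hreg : ∀ u v w, Y.Adj u w → Y.Adj v w → (Y.neighborSet u).ncard = (Y.neighborSet v).ncard)
    (n : ℕ) (f : ℕ → V) (hf : IndPath Y (n + 4) f) :
    ∃ g, IndPath Y (n + 5) g := by
  obtain ⟨hadj, hinj⟩ := hf
  have a01 : Y.Adj (f n) (f (n + 1)) := (hadj _ _ (by omega) (by omega)).2 (by omega)
  have a12 : Y.Adj (f (n + 1)) (f (n + 2)) := (hadj _ _ (by omega) (by omega)).2 (by omega)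
  have a23 : Y.Adj (f (n + 2)) (f (n + 3)) := (hadj _ _ (by omega) (by omega)).2 (by omega)
  have a03 : ¬ Y.Adj (f n) (f (n + 3)) := fun h => by
    have := (hadj _ _ (by omega) (by omega)).1 h
    omega
  obtain ⟨x, hx3, hx1⟩ : ∃ x, Y.Adj (f (n + 3)) x ∧ ¬ Y.Adj (f (n + 1)) x := by
    by_contra hcon
    push Not at hcon
    have hsub : Y.neighborSet (f (n + 3)) ⊆ Y.neighborSet (f (n + 1)) := fun x hx => hcon x hx
    have := Set.eq_of_subset_of_ncard_le hsub (hreg _ _ _ a12 a23.symm).le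
    have h0 : f n ∈ Y.neighborSet (f (n + 1)) := a01.symm
    rw [← this] at h0
    exact a03 (SimpleGraph.Adj.symm h0)
  have hxne : ∀ j, j < n + 4 → f j ≠ x := by
    intro j hj h
    subst h
    have h1 := (hadj _ _ (by omega) (by omega)).1 hx3
    have : j = n + 2 := by omega
    subst this
    exact hx1 a12
  have hxadj : ∀ i, i < n + 3 → ¬ Y.Adj (f i) x := by
    by_contra hcon
    push Not at hcon
    obtain ⟨i₀, hi₀, hi₀x⟩ := hcon
    classical
    set i := Nat.findGreatest (fun i => Y.Adj (f i) x) (n + 2) with hidef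
    have hix : Y.Adj (f i) x :=
      Nat.findGreatest_spec (P := fun i => Y.Adj (f i) x) (m := i₀) (by omega) hi₀x
    have hile : i ≤ n + 2 := Nat.findGreatest_le _
    have himax : ∀ k, i < k → k ≤ n + 2 → ¬ Y.Adj (f k) x := fun k hk hk' =>
      Nat.findGreatest_is_greatest hk hk'
    have c01 := hbip _ _ a01
    have c12 := hbip _ _ a12
    have c23 := hbip _ _ a23
    have c3x := hbip _ _ hx3
    have cix := hbip _ _ hix
    have hi2 : i ≠ n + 2 := by
      intro h; rw [h] at cix; tauto
    have hi1 : i ≠ n + 1 := by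
      intro h; rw [h] at hix; exact hx1 hix
    have hi0 : i ≠ n := by
      intro h; rw [h] at cix; tauto
    refine no_cycle Y hno i (n + 4) (by omega) (fun j => if j < n + 4 then f j else x) ?_ ?_
    · intro a b hia hab hb
      have ha : a < n + 4 := by omega
      simp only [ha, if_true]
      by_cases hb' : b < n + 4
      · simp only [hb', if_true]
        rw [hadj _ _ ha hb']
        omega
      · simp only [hb', if_false]
        have hb4 : b = n + 4 := by omega
        subst hb4
        by_cases h3 : a = n + 3
        · subst h3; simp [hx3]
        · by_cases h4 : a = i
          · rw [h4]; simp [hix]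
          · have := himax a (by omega) (by omega)
            simp only [this, false_iff]
            omega
    · intro a b hab hb
      have ha : a < n + 4 := by omega
      simp only [ha, if_true]
      by_cases hb' : b < n + 4
      · simp only [hb', if_true]
        intro h
        have := hinj _ _ ha hb' h
        omega
      · simp only [hb', if_false]
        exact hxne a ha
  refine ⟨fun j => if j < n + 4 then f j else x, ?_, ?_⟩
  · intro a b ha hb
    by_cases ha' : a < n + 4 <;> by_cases hb' : b < n + 4 <;> simp only [ha', hb', if_true, if_false]
    · exact hadj _ _ ha' hb'
    · by_cases h3 : a = n + 3
      · subst h3; simp [hx3]; omega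
      · simp only [hxadj a (by omega), false_iff]; omega
    · rw [SimpleGraph.adj_comm]
      by_cases h3 : b = n + 3
      · subst h3; simp [hx3]; omega
      · simp only [hxadj b (by omega), false_iff]; omega
    · simp; omega
  · intro a b ha hb
    by_cases ha' : a < n + 4 <;> by_cases hb' : b < n + 4 <;> simp only [ha', hb', if_true, if_false]
    · exact hinj _ _ ha' hb'
    · intro h; exact absurd h (hxne a ha')
    · intro h; exact absurd h.symm (hxne b hb')
    · intro _; omega

lemma core {V : Type*} [Finite V] (Y : SimpleGraph V) (A : Set V)
    (hbip : ∀ u v, Y.Adj u v → (u ∈ A ↔ v ∉ A)) (hno : NoLongInducedCycle Y)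
    (hreg : ∀ u v w, Y.Adj u w → Y.Adj v w → (Y.neighborSet u).ncard = (Y.neighborSet v).ncard)
    (u v w : V) (huw : Y.Adj u w) (hvw : Y.Adj v w) : Y.neighborSet u = Y.neighborSet v := by
  by_contra hne
  obtain ⟨a, hua, hva⟩ : ∃ a, Y.Adj u a ∧ ¬ Y.Adj v a := by
    by_contra hcon
    push Not at hcon
    exact hne (Set.eq_of_subset_of_ncard_le (fun x hx => hcon x hx) (hreg _ _ _ huw hvw).ge)
  have hall : ∀ n, ∃ g, IndPath Y (n + 4) g := by
    intro n
    induction n with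
    | zero =>
      refine ⟨fun i => if i = 0 then a else if i = 1 then u else if i = 2 then w else v, ?_, ?_⟩
      · have h1 := hbip _ _ huw
        have h2 := hbip _ _ hvw
        have h3 := hbip _ _ hua
        have haw : ¬ Y.Adj a w := fun h => by have := hbip _ _ h; tauto
        have huv : ¬ Y.Adj u v := fun h => by have := hbip _ _ h; tauto
        intro i j hi hj
        have hau := hua.symm
        have hwu := huw.symm
        have hwv := hvw.symm
        have hwa : ¬ Y.Adj w a := fun h => haw h.symm
        have hvu : ¬ Y.Adj v u := fun h => huv h.symm
        have hav : ¬ Y.Adj a v := fun h => hva h.symm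
        interval_cases i <;> interval_cases j <;> simp [*]
      · have h1 : a ≠ u := hua.ne'
        have h2 : a ≠ w := fun h => hva (h ▸ hvw)
        have h3 : a ≠ v := fun h => by
          subst h
          have h1 := hbip _ _ huw
          have h2 := hbip _ _ hvw
          have h3 := hbip _ _ hua
          tauto
        have h4 : u ≠ w := huw.ne
        have h5 : u ≠ v := fun h => hva (h ▸ hua)
        have h6 : w ≠ v := hvw.ne'
        intro i j hi hj
        interval_cases i <;> interval_cases j <;> simp [*, Ne.symm]
    | succ n ih =>
      obtain ⟨f, hf⟩ := ih
      exact extend_path Y A hbip hno hreg n f hf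
  obtain ⟨g, -, hg⟩ := hall (Nat.card V)
  have hinj : Function.Injective (fun i : Fin (Nat.card V + 4) => g i.val) :=
    fun i j h => Fin.ext (hg _ _ i.isLt j.isLt h)
  have := Nat.card_le_card_of_injective _ hinj
  simp at this

lemma numClasses_le {V : Type*} [Finite V] [Nonempty V] (X : SimpleGraph V) (Δ Γ : Set V)
    (hex : ∀ δ ∈ Δ, ∃ γ ∈ Γ, X.Adj δ γ)
    (h1 : ∀ δ ∈ Δ, ∀ δ' ∈ Δ, ∀ γ ∈ Γ, X.Adj δ γ → X.Adj δ' γ →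
      X.neighborSet δ ∩ Γ = X.neighborSet δ' ∩ Γ) :
    numClasses X Δ Γ ≤ numClasses X Γ Δ := by
  classical
  choose! c hcΓ hc using hex
  have hs : ∀ s ∈ (fun δ => X.neighborSet δ ∩ Γ) '' Δ, ∃ δ ∈ Δ, X.neighborSet δ ∩ Γ = s :=
    fun s hs => hs
  choose! d hdΔ hd using hs
  refine Set.ncard_le_ncard_of_injOn (fun s => X.neighborSet (c (d s)) ∩ Δ) ?_ ?_ (Set.toFinite _)
  · intro s hs
    exact ⟨c (d s), hcΓ _ (hdΔ s hs), rfl⟩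
  · intro s hs t ht hst
    have m1 : d s ∈ X.neighborSet (c (d s)) ∩ Δ := ⟨(hc _ (hdΔ s hs)).symm, hdΔ s hs⟩
    simp only at hst
    rw [hst] at m1
    have := h1 _ (hdΔ s hs) _ (hdΔ t ht) _ (hcΓ _ (hdΔ t ht)) (SimpleGraph.Adj.symm m1.1)
      (hc _ (hdΔ t ht))
    rw [← hd s hs, ← hd t ht, this]

namespace CoherentConfiguration

variable {Ω : Type*} [Finite Ω] (C : CoherentConfiguration Ω)

lemma fiber_fst {Δ : Set Ω} (hΔ : C.IsFiber Δ) {s : Set (Ω × Ω)} (hs : s ∈ C.S)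
    {p q : Ω × Ω} (hp : p ∈ s) (hq : q ∈ s) (h : p.1 ∈ Δ) : q.1 ∈ Δ := by
  have := C.regularity _ hΔ s hs s hs p hp q hq
  have hpos : 0 < {γ : Ω | (p.1, γ) ∈ {p : Ω × Ω | p.1 = p.2 ∧ p.1 ∈ Δ} ∧ (γ, p.2) ∈ s}.ncard :=
    (Set.ncard_pos (Set.toFinite _)).2 ⟨p.1, ⟨rfl, h⟩, hp⟩
  rw [this] at hpos
  obtain ⟨x, hx, -⟩ := (Set.ncard_pos (Set.toFinite _)).1 hpos
  exact hx.2

lemma fiber_snd {Δ : Set Ω} (hΔ : C.IsFiber Δ) {s : Set (Ω × Ω)} (hs : s ∈ C.S)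
    {p q : Ω × Ω} (hp : p ∈ s) (hq : q ∈ s) (h : p.2 ∈ Δ) : q.2 ∈ Δ :=
  C.fiber_fst hΔ (C.converse_mem s hs) (p := (p.2, p.1)) (q := (q.2, q.1)) hp hq h

lemma outdeg {Δ : Set Ω} (hΔ : C.IsFiber Δ) {s : Set (Ω × Ω)} (hs : s ∈ C.S)
    {β β' : Ω} (hβ : β ∈ Δ) (hβ' : β' ∈ Δ) :
    {γ | (β, γ) ∈ s}.ncard = {γ | (β', γ) ∈ s}.ncard := by
  have := C.regularity s hs _ (C.converse_mem s hs) _ hΔ (β, β) ⟨rfl, hβ⟩ (β', β') ⟨rfl, hβ'⟩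
  simpa using this

lemma exists_fiber (β : Ω) : ∃ Δ, C.IsFiber Δ ∧ β ∈ Δ := by
  obtain ⟨s, ⟨hs, hβ⟩, -⟩ := C.partition (β, β)
  refine ⟨{x | (x, x) ∈ s}, ?_, hβ⟩
  have : {p : Ω × Ω | p.1 = p.2 ∧ p.1 ∈ {x | (x, x) ∈ s}} = s := by
    ext ⟨x, y⟩
    constructor
    · rintro ⟨h1, h2⟩
      simp only at h1
      subst h1
      exact h2
    · intro h
      have h1 : x = y := C.diag_union s hs ⟨_, hβ, rfl⟩ _ h
      subst h1
      exact ⟨rfl, h⟩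
  unfold IsFiber
  rw [this]
  exact hs

lemma eq_of_mem {s t : Set (Ω × Ω)} (hs : s ∈ C.S) (ht : t ∈ C.S) {p : Ω × Ω}
    (hps : p ∈ s) (hpt : p ∈ t) : s = t :=
  (C.partition p).unique ⟨hs, hps⟩ ⟨ht, hpt⟩

lemma fiber_eq {Δ Γ : Set Ω} (hΔ : C.IsFiber Δ) (hΓ : C.IsFiber Γ) {x : Ω}
    (h1 : x ∈ Δ) (h2 : x ∈ Γ) : Δ = Γ := by
  have := C.eq_of_mem hΔ hΓ (p := (x, x)) ⟨rfl, h1⟩ ⟨rfl, h2⟩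
  ext y
  have h := Set.ext_iff.1 this (y, y)
  simpa using h

/-- Every vertex in the fiber of `β` has a neighbour in the fiber of `γ`. -/
lemma step {X : SimpleGraph Ω} (hcomp : C.Compatible X) {Δ Γ : Set Ω} (hΔ : C.IsFiber Δ)
    (hΓ : C.IsFiber Γ) {β β' γ : Ω} (hβ : β ∈ Δ) (hβ' : β' ∈ Δ) (hγ : γ ∈ Γ)
    (hadj : X.Adj β γ) : ∃ γ' ∈ Γ, X.Adj β' γ' := by
  obtain ⟨s, ⟨hs, hp⟩, -⟩ := C.partition (β, γ)
  have h := C.outdeg hΔ hs hβ hβ'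
  have hpos : 0 < {γ | (β, γ) ∈ s}.ncard := (Set.ncard_pos (Set.toFinite _)).2 ⟨γ, hp⟩
  rw [h] at hpos
  obtain ⟨γ', hγ'⟩ := (Set.ncard_pos (Set.toFinite _)).1 hpos
  exact ⟨γ', C.fiber_snd hΓ hs hp hγ' hγ, hcomp s hs ⟨_, hp, hadj⟩ _ hγ'⟩

lemma degree_const {X : SimpleGraph Ω} (hcomp : C.Compatible X) {Δ Γ : Set Ω} (hΔ : C.IsFiber Δ)
    (hΓ : C.IsFiber Γ) {β β' : Ω} (hβ : β ∈ Δ) (hβ' : β' ∈ Δ) :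
    (X.neighborSet β ∩ Γ).ncard = (X.neighborSet β' ∩ Γ).ncard := by
  classical
  have := Fintype.ofFinite Ω
  choose c hc using fun p => (C.partition p).exists
  have key : ∀ β, (X.neighborSet β ∩ Γ).ncard = ∑ s : Set (Ω × Ω),
      {γ | (γ ∈ X.neighborSet β ∩ Γ) ∧ c (β, γ) = s}.ncard := by
    intro β
    rw [Set.ncard_eq_toFinset_card' (X.neighborSet β ∩ Γ),
      Finset.card_eq_sum_card_fiberwise (f := fun γ => c (β, γ)) (t := Finset.univ) (by simp)]
    refine Finset.sum_congr rfl fun s _ => ?_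
    rw [Set.ncard_eq_toFinset_card']
    congr 1
    ext
    simp
  rw [key, key]
  refine Finset.sum_congr rfl fun s _ => ?_
  have aux : ∀ β β', β ∈ Δ → β' ∈ Δ → ∀ γ, γ ∈ X.neighborSet β ∩ Γ → c (β, γ) = s →
      {γ | (γ ∈ X.neighborSet β' ∩ Γ) ∧ c (β', γ) = s} = {γ | (β', γ) ∈ s} ∧ s ∈ C.S := by
    intro β β' hβ hβ' γ hγ hs
    have hsS : s ∈ C.S := hs ▸ (hc (β, γ)).1
    have hp : (β, γ) ∈ s := hs ▸ (hc (β, γ)).2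
    refine ⟨?_, hsS⟩
    ext γ'
    constructor
    · rintro ⟨-, h⟩
      have := (hc (β', γ')).2
      rw [h] at this
      exact this
    · intro h
      exact ⟨⟨hcomp s hsS ⟨_, hp, hγ.1⟩ _ h, C.fiber_snd hΓ hsS hp h hγ.2⟩,
        C.eq_of_mem (hc _).1 hsS (hc _).2 h⟩
  by_cases h1 : ∃ γ, γ ∈ X.neighborSet β ∩ Γ ∧ c (β, γ) = s
  · obtain ⟨γ, hγ, hs⟩ := h1
    rw [(aux β β hβ hβ γ hγ hs).1, (aux β β' hβ hβ' γ hγ hs).1]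
    exact C.outdeg hΔ (aux β β hβ hβ γ hγ hs).2 hβ hβ'
  · by_cases h2 : ∃ γ, γ ∈ X.neighborSet β' ∩ Γ ∧ c (β', γ) = s
    · obtain ⟨γ, hγ, hs⟩ := h2
      rw [(aux β' β hβ' hβ γ hγ hs).1, (aux β' β' hβ' hβ' γ hγ hs).1]
      exact C.outdeg hΔ (aux β' β hβ' hβ γ hγ hs).2 hβ hβ'
    · congr 1
      ext γ
      exact iff_of_false (fun h => h1 ⟨γ, h⟩) (fun h => h2 ⟨γ, h⟩)

lemma same_side {X : SimpleGraph Ω} {P Q : Set Ω} (hconn : X.Connected)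
    (hbip : IsBipartition X P Q) {α : Ω} (hcomp : C.Compatible X) (hdist : C.Distinguished α)
    (β : Ω) : ∀ Δ, C.IsFiber Δ → β ∈ Δ → ∀ β' ∈ Δ, (β ∈ P ↔ β' ∈ P) := by
  obtain ⟨hb1, hb2, hb3⟩ := hbip
  have side : ∀ u v, X.Adj u v → (u ∈ P ↔ v ∉ P) := by
    intro u v h
    have hd := fun x (h1 : x ∈ P) (h2 : x ∈ Q) => Set.disjoint_left.1 hb2 h1 h2
    have := hd u
    have := hd v
    have := hb3 u v h
    tauto
  obtain ⟨w⟩ := hconn.preconnected β α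
  induction w with
  | nil =>
    intro Δ hΔ hα β' hβ'
    have h := C.eq_of_mem hΔ hdist (p := (_, _)) ⟨rfl, hα⟩ rfl
    have h2 : (β', β') ∈ {p : Ω × Ω | p.1 = p.2 ∧ p.1 ∈ Δ} := ⟨rfl, hβ'⟩
    rw [h] at h2
    have h3 := congrArg Prod.fst h2
    simp only at h3
    rw [h3]
  | @cons u v _ h _ ih =>
    intro Δ hΔ hu β' hβ'
    obtain ⟨Γ, hΓ, hv⟩ := C.exists_fiber v
    obtain ⟨γ', hγ', hadj⟩ := C.step hcomp hΔ hΓ hu hβ' hv h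
    rw [side _ _ h, side _ _ hadj, ih hdist Γ hΓ hv γ' hγ']

end CoherentConfiguration

theorem stmt_8 {Ω : Type*} [Fintype Ω] (X : SimpleGraph Ω) (P Q : Set Ω)
    (hconn : X.Connected) (hbip : IsBipartition X P Q) (hchordal : NoLongInducedCycle X)
    (α : Ω) (C : CoherentConfiguration Ω)
    (hcomp : C.Compatible X) (hdist : C.Distinguished α)
    (Δ Γ : Set Ω) (hΔ : C.IsFiber Δ) (hΓ : C.IsFiber Γ) (hne : Δ ≠ Γ) :
    numClasses X Δ Γ = numClasses X Γ Δ := by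
  have : Nonempty Ω := ⟨α⟩
  have hdisj : ∀ x, x ∈ Δ → x ∉ Γ := fun x h1 h2 => hne (C.fiber_eq hΔ hΓ h1 h2)
  have nonempty : ∀ Δ, C.IsFiber Δ → Δ.Nonempty := fun Δ h => by
    obtain ⟨p, hp⟩ := C.nonempty_mem _ h
    exact ⟨p.1, hp.2⟩
  have indep : ∀ Δ, C.IsFiber Δ → ∀ u ∈ Δ, ∀ v ∈ Δ, ¬ X.Adj u v := by
    intro Δ hΔ u hu v hv hadj
    have h1 := C.same_side hconn hbip hcomp hdist u Δ hΔ hu v hv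
    have hd := fun x (h1 : x ∈ P) (h2 : x ∈ Q) => Set.disjoint_left.1 hbip.2.1 h1 h2
    have := hd u
    have := hd v
    have := hbip.2.2 u v hadj
    tauto
  by_cases hE : ∃ δ ∈ Δ, ∃ γ ∈ Γ, X.Adj δ γ
  · obtain ⟨δ₀, hδ₀, γ₀, hγ₀, h₀⟩ := hE
    have ex1 : ∀ δ ∈ Δ, ∃ γ ∈ Γ, X.Adj δ γ := fun δ hδ => C.step hcomp hΔ hΓ hδ₀ hδ hγ₀ h₀
    have ex2 : ∀ δ ∈ Γ, ∃ γ ∈ Δ, X.Adj δ γ := fun δ hδ => C.step hcomp hΓ hΔ hγ₀ hδ hδ₀ h₀.symm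
    let Y : SimpleGraph Ω :=
      { Adj := fun u v => X.Adj u v ∧ ((u ∈ Δ ∧ v ∈ Γ) ∨ (u ∈ Γ ∧ v ∈ Δ))
        symm := ⟨fun u v h => ⟨h.1.symm, by tauto⟩⟩
        loopless := ⟨fun u h => X.loopless.irrefl u h.1⟩ }
    have hY : ∀ u v, Y.Adj u v ↔ X.Adj u v ∧ ((u ∈ Δ ∧ v ∈ Γ) ∨ (u ∈ Γ ∧ v ∈ Δ)) :=
      fun u v => Iff.rfl
    have n1 : ∀ u ∈ Δ, Y.neighborSet u = X.neighborSet u ∩ Γ := by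
      intro u hu
      ext v
      have := hdisj u hu
      simp only [SimpleGraph.mem_neighborSet, hY, Set.mem_inter_iff]
      tauto
    have n2 : ∀ u ∈ Γ, Y.neighborSet u = X.neighborSet u ∩ Δ := by
      intro u hu
      ext v
      have := hdisj u
      simp only [SimpleGraph.mem_neighborSet, hY, Set.mem_inter_iff]
      tauto
    have hYno : NoLongInducedCycle Y := by
      intro n hn
      refine ⟨fun e => (hchordal n hn).false ⟨e.toEmbedding, ?_⟩⟩
      have hmem : ∀ i, e i ∈ Δ ∨ e i ∈ Γ := by
        intro i
        obtain ⟨m, rfl⟩ : ∃ m, n = m + 2 := ⟨n - 2, by omega⟩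
        have h : (SimpleGraph.cycleGraph (m + 2)).Adj i (i + 1) := by
          rw [SimpleGraph.cycleGraph_adj]; right; simp
        have := (hY _ _).1 (e.map_rel_iff.2 h)
        tauto
      intro i j
      rw [← e.map_rel_iff]
      change X.Adj (e i) (e j) ↔ Y.Adj (e i) (e j)
      rw [hY]
      refine ⟨fun h => ⟨h, ?_⟩, fun h => h.1⟩
      have := hmem i
      have := hmem j
      have := fun h1 h2 => indep Δ hΔ (e i) h1 (e j) h2 h
      have := fun h1 h2 => indep Γ hΓ (e i) h1 (e j) h2 h
      tauto
    have hcore := core Y Δ (fun u v h => by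
        have := hdisj u
        have := hdisj v
        have := (hY u v).1 h
        tauto) hYno (fun u v w h1 h2 => by
        have hw := hdisj w
        rcases ((hY _ _).1 h1).2 with h | h <;> rcases ((hY _ _).1 h2).2 with h' | h'
        · rw [n1 u h.1, n1 v h'.1]; exact C.degree_const hcomp hΔ hΓ h.1 h'.1
        · exact absurd h.2 (hw h'.2)
        · exact absurd h'.2 (hw h.2)
        · rw [n2 u h.1, n2 v h'.1]; exact C.degree_const hcomp hΓ hΔ h.1 h'.1)
    apply le_antisymm
    · refine numClasses_le X Δ Γ ex1 fun δ hδ δ' hδ' γ hγ h1 h2 => ?_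
      rw [← n1 δ hδ, ← n1 δ' hδ']
      exact hcore δ δ' γ ⟨h1, Or.inl ⟨hδ, hγ⟩⟩ ⟨h2, Or.inl ⟨hδ', hγ⟩⟩
    · refine numClasses_le X Γ Δ ex2 fun δ hδ δ' hδ' γ hγ h1 h2 => ?_
      rw [← n2 δ hδ, ← n2 δ' hδ']
      exact hcore δ δ' γ ⟨h1, Or.inr ⟨hδ, hγ⟩⟩ ⟨h2, Or.inr ⟨hδ', hγ⟩⟩
  · push Not at hE
    have one : ∀ Δ Γ : Set Ω, Δ.Nonempty → (∀ δ ∈ Δ, ∀ γ ∈ Γ, ¬ X.Adj δ γ) →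
        numClasses X Δ Γ = 1 := by
      intro Δ Γ hn h
      have h2 : (fun δ => X.neighborSet δ ∩ Γ) '' Δ = (fun _ => (∅ : Set Ω)) '' Δ := by
        refine Set.image_congr fun δ hδ => ?_
        ext γ
        constructor
        · rintro ⟨h1, h2⟩
          exact h δ hδ γ h2 h1
        · intro h; exact h.elim
      unfold numClasses
      rw [h2, hn.image_const, Set.ncard_singleton]
    rw [one Δ Γ (nonempty Δ hΔ) hE,
      one Γ Δ (nonempty Γ hΓ) (fun γ hγ δ hδ h => hE δ hδ γ hγ h.symm)]
end

section
/- Let X be a connected chordal bipartite graph, let α be a vertex of X, and let (Ω,S) be a coherent configuration on the vertex set Ω of X compatible with X in which α is distinguished. Then for every fiber Δ of (Ω,S), the set of equivalence relations {e_{Δ,Γ} : Γ a fiber of (Ω,S) distinct from Δ} is linearly ordered by inclusion: for all fibers Γ and Λ distinct from Δ, either e_{Δ,Γ} ⊆ e_{Δ,Λ} or e_{Δ,Λ} ⊆ e_{Δ,Γ}. -/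
open SimpleGraph

/-- An infinite sequence of consecutive neighbours with no chords of length three
cannot exist in a finite chordal bipartite graph. -/
theorem aux_seq {V : Type*} [Finite V] (X : SimpleGraph V) (P Q : Set V)
    (hbip : IsBipartition X P Q) (hch : NoLongInducedCycle X)
    (a : ℕ → V) (h1 : ∀ n, X.Adj (a n) (a (n + 1)))
    (h3 : ∀ n, ¬ X.Adj (a n) (a (n + 3))) : False := by
  have hpq : ∀ u v, X.Adj u v → (u ∈ P ↔ v ∉ P) := by
    intro u v huv
    have hd := Set.disjoint_left.mp hbip.2.1
    rcases hbip.2.2 u v huv with ⟨h, h'⟩ | ⟨h, h'⟩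
    · exact ⟨fun _ hv => hd hv h', fun _ => h⟩
    · exact ⟨fun hu => absurd h (hd hu), fun hv => absurd h' hv⟩
  have hpar : ∀ i k, (a (i + 2 * k) ∈ P ↔ a i ∈ P) := by
    intro i k
    induction k with
    | zero => simp
    | succ k ih =>
      rw [← ih]
      have e1 := hpq _ _ (h1 (i + 2 * k))
      have e2 := hpq _ _ (h1 (i + 2 * k + 1))
      have : i + 2 * (k + 1) = i + 2 * k + 1 + 1 := by ring
      rw [this]
      tauto
  have h2 : ∀ k, a k ≠ a (k + 2) := by
    intro k hk
    have := h1 (k + 2)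
    rw [← hk] at this
    exact h3 k this
  -- injectivity on stretches without chords
  have hinj : ∀ k d, 1 ≤ d → (∀ e, 2 ≤ e → e < d → ∀ i, ¬ X.Adj (a i) (a (i + e))) →
      a k ≠ a (k + d) := by
    intro k d hd hno hk
    by_cases hd1 : d = 1
    · subst hd1
      exact (h1 k).ne hk
    by_cases hd2 : d = 2
    · subst hd2
      exact h2 k hk
    have := (h1 (k + (d - 1))).symm
    have e : k + (d - 1) + 1 = k + d := by omega
    rw [e, ← hk] at this
    exact hno (d - 1) (by omega) (by omega) k this
  have hnc : ∀ d, 2 ≤ d → ∀ i, ¬ X.Adj (a i) (a (i + d)) := by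
    intro d
    induction d using Nat.strong_induction_on with
    | _ d ih =>
      intro hd i hadj
      rcases Nat.even_or_odd' d with ⟨k, hk | hk⟩
      · have e1 := hpq _ _ hadj
        have e2 := hpar i k
        rw [← hk] at e2
        tauto
      · have hd3 : d ≠ 3 := by
          rintro rfl
          exact h3 i hadj
        have hlt : ∀ e, 2 ≤ e → e < d → ∀ i, ¬ X.Adj (a i) (a (i + e)) :=
          fun e h h' => ih e h' h
        have hne : ∀ j k, j < k → k < d + 1 → a (i + j) ≠ a (i + k) := by
          intro j k hjk hkd
          have := hinj (i + j) (k - j) (by omega) (fun e h h' => hlt e h (by omega))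
          have e : i + j + (k - j) = i + k := by omega
          rwa [e] at this
        have hadj' : ∀ j k, j < k → k < d + 1 →
            (X.Adj (a (i + j)) (a (i + k)) ↔ (k = j + 1 ∨ (j = 0 ∧ k = d))) := by
          intro j k hjk hkd
          constructor
          · intro h
            by_contra hcon
            have := hlt (k - j) (by omega) (by omega) (i + j)
            have e : i + j + (k - j) = i + k := by omega
            rw [e] at this
            exact this h
          · rintro (rfl | ⟨rfl, rfl⟩)
            · exact h1 (i + j)
            · exact hadj
        have hcyc : ∀ j k : Fin (d + 1), j.val < k.val →
            ((SimpleGraph.cycleGraph (d + 1)).Adj j k ↔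
              (k.val = j.val + 1 ∨ (j.val = 0 ∧ k.val = d))) := by
          intro j k hjk
          rw [SimpleGraph.cycleGraph_adj', Fin.sub_val_of_le (a := k) (b := j) hjk.le,
            Fin.coe_sub_iff_lt.mpr hjk]
          have := k.isLt
          omega
        refine (hch (d + 1) (by omega)).false
          ⟨⟨fun j => a (i + j.val), ?_⟩, ?_⟩
        · intro j k hjk
          rcases lt_trichotomy j.val k.val with h | h | h
          · exact absurd hjk (hne _ _ h k.isLt)
          · exact Fin.ext h
          · exact absurd hjk.symm (hne _ _ h j.isLt)
        · intro j k
          change X.Adj (a (i + j.val)) (a (i + k.val)) ↔ _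
          rcases lt_trichotomy j.val k.val with h | h | h
          · rw [hadj' _ _ h k.isLt, hcyc _ _ h]
          · rw [Fin.ext h]
            simp
          · rw [X.adj_comm, SimpleGraph.adj_comm (SimpleGraph.cycleGraph (d + 1)),
              hadj' _ _ h j.isLt, hcyc _ _ h]
  refine not_injective_infinite_finite a ?_
  intro j k hjk
  rcases lt_trichotomy j k with h | h | h
  · have := hinj j (k - j) (by omega) (fun e h _ => hnc e h)
    have e : j + (k - j) = k := by omega
    rw [e] at this
    exact absurd hjk this
  · exact h
  · have := hinj k (j - k) (by omega) (fun e h _ => hnc e h)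
    have e : k + (j - k) = j := by omega
    rw [e] at this
    exact absurd hjk.symm this

theorem aux_triple {V : Type*} [Finite V] (X : SimpleGraph V) (P Q : Set V)
    (hbip : IsBipartition X P Q) (hch : NoLongInducedCycle X)
    (T : V → V → V → Prop) (hT : ∀ x y z, T x y z → X.Adj y z)
    (hstep : ∀ x y z, T x y z → ∃ w, ¬ X.Adj w z ∧ T w x y)
    (x y z : V) (h0 : T x y z) : False := by
  choose w hw1 hw2 using hstep
  let nxt : {t : V × V × V // T t.1 t.2.1 t.2.2} → {t : V × V × V // T t.1 t.2.1 t.2.2} :=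
    fun t => ⟨(w _ _ _ t.2, t.1.1, t.1.2.1), hw2 _ _ _ t.2⟩
  let s : ℕ → {t : V × V × V // T t.1 t.2.1 t.2.2} :=
    fun n => Nat.rec ⟨(x, y, z), h0⟩ (fun _ t => nxt t) n
  have hs : ∀ n, s (n + 1) = nxt (s n) := fun n => rfl
  refine aux_seq X P Q hbip hch (fun n => (s n).1.2.2) ?_ ?_
  · intro n
    simp only [hs, nxt]
    exact (hT _ _ _ (s n).2).symm
  · intro n h
    have e : (s (n + 3)).1.2.2 = w _ _ _ (s n).2 := rfl
    simp only [e] at h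
    exact hw1 _ _ _ _ h.symm

namespace CoherentConfiguration

variable {Ω : Type*}

/-- Two pairs lie in the same basis relation. -/
def Same (C : CoherentConfiguration Ω) (a b a' b' : Ω) : Prop :=
  ∃ s ∈ C.S, (a, b) ∈ s ∧ (a', b') ∈ s

theorem Same.symm {C : CoherentConfiguration Ω} {a b a' b' : Ω} (h : C.Same a b a' b') :
    C.Same a' b' a b := by
  obtain ⟨s, hs, h1, h2⟩ := h
  exact ⟨s, hs, h2, h1⟩

theorem Same.transport [Finite Ω] {C : CoherentConfiguration Ω} {a b a' b' : Ω}
    (h : C.Same a b a' b') (c : Ω) : ∃ c', C.Same a c a' c' ∧ C.Same c b c' b' := by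
  obtain ⟨t, ht, h1, h2⟩ := h
  obtain ⟨r, ⟨hr, hr'⟩, -⟩ := C.partition (a, c)
  obtain ⟨s, ⟨hs, hs'⟩, -⟩ := C.partition (c, b)
  have := C.regularity r hr s hs t ht _ h1 _ h2
  have hpos : 0 < {γ : Ω | ((a, b).1, γ) ∈ r ∧ (γ, (a, b).2) ∈ s}.ncard :=
    (Set.ncard_pos (Set.toFinite _)).mpr ⟨c, hr', hs'⟩
  rw [this] at hpos
  obtain ⟨c', hc1, hc2⟩ := (Set.ncard_pos (Set.toFinite _)).mp hpos
  exact ⟨c', ⟨r, hr, hr', hc1⟩, ⟨s, hs, hs', hc2⟩⟩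

theorem Same.diag {C : CoherentConfiguration Ω} {a a' b' : Ω}
    (h : C.Same a a a' b') : a' = b' := by
  obtain ⟨s, hs, h1, h2⟩ := h
  exact C.diag_union s hs ⟨_, h1, rfl⟩ _ h2

theorem Same.right [Finite Ω] {C : CoherentConfiguration Ω} {a b a' b' : Ω}
    (h : C.Same a b a' b') : C.Same b b b' b' := by
  obtain ⟨c', -, h2⟩ := h.transport b
  have := h2.diag
  subst this
  exact h2

theorem Same.left [Finite Ω] {C : CoherentConfiguration Ω} {a b a' b' : Ω}
    (h : C.Same a b a' b') : C.Same a a a' a' := by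
  obtain ⟨c', h2, -⟩ := h.transport a
  have := h2.diag
  subst this
  exact h2

theorem Same.fiber {C : CoherentConfiguration Ω} {a a' : Ω} (h : C.Same a a a' a')
    {Γ : Set Ω} (hΓ : C.IsFiber Γ) (ha : a ∈ Γ) : a' ∈ Γ := by
  obtain ⟨s, hs, h1, h2⟩ := h
  have := (C.partition (a, a)).unique ⟨hs, h1⟩ ⟨hΓ, rfl, ha⟩
  rw [this] at h2
  exact h2.2

theorem IsFiber.same {C : CoherentConfiguration Ω} {Γ : Set Ω} (hΓ : C.IsFiber Γ)
    {a b : Ω} (ha : a ∈ Γ) (hb : b ∈ Γ) : C.Same a a b b :=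
  ⟨_, hΓ, ⟨rfl, ha⟩, ⟨rfl, hb⟩⟩

theorem Same.adj {C : CoherentConfiguration Ω} {X : SimpleGraph Ω} (hX : C.Compatible X)
    {a b a' b' : Ω} (h : C.Same a b a' b') (hab : X.Adj a b) : X.Adj a' b' := by
  obtain ⟨s, hs, h1, h2⟩ := h
  exact hX s hs ⟨_, h1, hab⟩ _ h2

theorem Same.swap {C : CoherentConfiguration Ω}
    {a b a' b' : Ω} (h : C.Same a b a' b') : C.Same b a b' a' := by
  obtain ⟨s, hs, h1, h2⟩ := h
  exact ⟨_, C.converse_mem s hs, h1, h2⟩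

theorem Same.sub [Finite Ω] {C : CoherentConfiguration Ω} {X : SimpleGraph Ω}
    (hX : C.Compatible X) {Γ : Set Ω} (hΓ : C.IsFiber Γ)
    {x z x' z' : Ω} (h : C.Same x z x' z')
    (hs : X.neighborSet x ∩ Γ ⊆ X.neighborSet z ∩ Γ) :
    X.neighborSet x' ∩ Γ ⊆ X.neighborSet z' ∩ Γ := by
  rintro g ⟨hg1, hg2⟩
  obtain ⟨c, hc1, hc2⟩ := h.symm.transport g
  have := hs ⟨hc1.adj hX hg1, hc1.right.fiber hΓ hg2⟩
  exact ⟨(hc2.symm.adj hX this.1.symm).symm, hg2⟩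

theorem Same.eqv [Finite Ω] {C : CoherentConfiguration Ω} {X : SimpleGraph Ω}
    (hX : C.Compatible X) {Γ : Set Ω} (hΓ : C.IsFiber Γ)
    {x z x' z' : Ω} (h : C.Same x z x' z')
    (hs : X.neighborSet x ∩ Γ = X.neighborSet z ∩ Γ) :
    X.neighborSet x' ∩ Γ = X.neighborSet z' ∩ Γ :=
  (h.sub hX hΓ hs.subset).antisymm (h.swap.sub hX hΓ hs.symm.subset)

/-- Neighbourhoods of vertices of one fiber form an antichain. -/
theorem IsFiber.antichain [Finite Ω] {C : CoherentConfiguration Ω} {X : SimpleGraph Ω}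
    (hX : C.Compatible X) {Δ Γ : Set Ω} (hΔ : C.IsFiber Δ) (hΓ : C.IsFiber Γ)
    {x z : Ω} (hx : x ∈ Δ) (hz : z ∈ Δ)
    (hs : X.neighborSet x ∩ Γ ⊆ X.neighborSet z ∩ Γ) :
    X.neighborSet x ∩ Γ = X.neighborSet z ∩ Γ := by
  by_contra hne
  obtain ⟨m, hm, hmax⟩ := Set.exists_max_image Δ (fun v => (X.neighborSet v ∩ Γ).ncard)
    (Set.toFinite _) ⟨x, hx⟩
  obtain ⟨m', hm1, -⟩ := (hΔ.same hx hm).transport z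
  have hlt : X.neighborSet m ∩ Γ ⊂ X.neighborSet m' ∩ Γ :=
    (hm1.sub hX hΓ hs).ssubset_of_ne fun h => hne (hm1.symm.eqv hX hΓ h)
  have h1 := Set.ncard_lt_ncard hlt (Set.toFinite _)
  have h2 := hmax m' (hm1.right.fiber hΔ hz)
  omega

/-- The graph between two fibers is a disjoint union of bicliques. -/
theorem IsFiber.biclique [Finite Ω] {C : CoherentConfiguration Ω} {X : SimpleGraph Ω}
    (hX : C.Compatible X) {P Q : Set Ω} (hbip : IsBipartition X P Q)
    (hch : NoLongInducedCycle X)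
    {Δ Γ : Set Ω} (hΔ : C.IsFiber Δ) (hΓ : C.IsFiber Γ)
    {x y z : Ω} (hx : x ∈ Δ) (hz : z ∈ Δ) (hy : y ∈ Γ) (hxy : X.Adj x y) (hyz : X.Adj y z) :
    X.neighborSet x ∩ Γ = X.neighborSet z ∩ Γ := by
  by_contra hne
  refine aux_triple X P Q hbip hch
    (fun x y z => ∃ A B : Set Ω, C.IsFiber A ∧ C.IsFiber B ∧ x ∈ A ∧ z ∈ A ∧ y ∈ B ∧
      X.Adj x y ∧ X.Adj y z ∧ X.neighborSet x ∩ B ≠ X.neighborSet z ∩ B) ?_ ?_ x y z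
      ⟨Δ, Γ, hΔ, hΓ, hx, hz, hy, hxy, hyz, hne⟩
  · rintro x y z ⟨A, B, -, -, -, -, -, -, h, -⟩
    exact h
  · rintro x y z ⟨A, B, hA, hB, hx, hz, hy, hxy, hyz, hne⟩
    have : ¬ X.neighborSet x ∩ B ⊆ X.neighborSet z ∩ B :=
      fun h => hne (hA.antichain hX hB hx hz h)
    obtain ⟨w, ⟨hw1, hw2⟩, hw3⟩ := Set.not_subset.mp this
    have hwz : ¬ X.Adj w z := fun h => hw3 ⟨h.symm, hw2⟩
    refine ⟨w, hwz, B, A, hB, hA, hw2, hy, hx, hw1.symm, hxy, fun h => ?_⟩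
    have : z ∈ X.neighborSet y ∩ A := ⟨hyz, hz⟩
    rw [← h] at this
    exact hwz this.1

end CoherentConfiguration

theorem stmt_9 {Ω : Type*} [Fintype Ω] (X : SimpleGraph Ω) (P Q : Set Ω)
    (hconn : X.Connected) (hbip : IsBipartition X P Q) (hchordal : NoLongInducedCycle X)
    (α : Ω) (C : CoherentConfiguration Ω)
    (hcomp : C.Compatible X) (hdist : C.Distinguished α)
    (Δ : Set Ω) (hΔ : C.IsFiber Δ) :
    ∀ Γ Λ : Set Ω, C.IsFiber Γ → C.IsFiber Λ → Γ ≠ Δ → Λ ≠ Δ →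
      eRel X Δ Γ ⊆ eRel X Δ Λ ∨ eRel X Δ Λ ⊆ eRel X Δ Γ := by
  intro Γ Λ hΓ hΛ _ _
  by_contra hcon
  rw [not_or] at hcon
  -- the valency facts, stated symmetrically
  have key : ∀ A B : Set Ω, C.IsFiber A → C.IsFiber B → ¬ eRel X Δ A ⊆ eRel X Δ B →
      (∀ d ∈ Δ, ∃ b ∈ B, X.Adj d b) ∧
      (∀ d ∈ Δ, ∃ d' ∈ Δ, X.neighborSet d ∩ A = X.neighborSet d' ∩ A ∧
        X.neighborSet d' ∩ B ≠ X.neighborSet d ∩ B) := by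
    intro A B hA hB h
    obtain ⟨⟨u, v⟩, ⟨hu, hv, huv⟩, hn⟩ := Set.not_subset.mp h
    simp only at hu hv huv
    have hn' : X.neighborSet u ∩ B ≠ X.neighborSet v ∩ B := fun h => hn ⟨hu, hv, h⟩
    constructor
    · intro d hd
      have hne : ∃ c ∈ Δ, (X.neighborSet c ∩ B).Nonempty := by
        by_contra hno
        push Not at hno
        exact hn' ((hno u hu).trans (hno v hv).symm)
      obtain ⟨c, hc, b, hb1, hb2⟩ := hne
      obtain ⟨b', hb', -⟩ := (hΔ.same hc hd).transport b
      exact ⟨b', hb'.right.fiber hB hb2, hb'.adj hcomp hb1⟩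
    · intro d hd
      obtain ⟨d', hd', -⟩ := (hΔ.same hu hd).transport v
      exact ⟨d', hd'.right.fiber hΔ hv, hd'.eqv hcomp hA huv,
        fun h => hn' (hd'.symm.eqv hcomp hB h.symm)⟩
  obtain ⟨d0, hd0⟩ : Δ.Nonempty := by
    obtain ⟨p, hp⟩ := C.nonempty_mem _ hΔ
    exact ⟨p.1, hp.2⟩
  obtain ⟨g0, hg0, hdg⟩ := (key Λ Γ hΛ hΓ hcon.2).1 d0 hd0
  obtain ⟨l0, hl0, hdl⟩ := (key Γ Λ hΓ hΛ hcon.1).1 d0 hd0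
  refine aux_triple X P Q hbip hchordal
    (fun x y z => X.Adj x y ∧ X.Adj y z ∧ ∃ A B : Set Ω, C.IsFiber A ∧ C.IsFiber B ∧
      ¬ eRel X Δ A ⊆ eRel X Δ B ∧ ¬ eRel X Δ B ⊆ eRel X Δ A ∧
      ((x ∈ Δ ∧ z ∈ Δ ∧ y ∈ A ∧ X.neighborSet x ∩ B ≠ X.neighborSet z ∩ B) ∨
        (x ∈ A ∧ y ∈ Δ ∧ z ∈ B))) ?_ ?_ l0 d0 g0
      ⟨hdl.symm, hdg, Λ, Γ, hΛ, hΓ, hcon.2, hcon.1, Or.inr ⟨hl0, hd0, hg0⟩⟩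
  · rintro x y z ⟨-, h, -⟩
    exact h
  · rintro x y z ⟨hxy, hyz, A, B, hA, hB, hAB, hBA, ⟨hx, hz, hy, hne⟩ | ⟨hx, hy, hz⟩⟩
    · obtain ⟨b, hb, hxb⟩ := (key A B hA hB hAB).1 x hx
      refine ⟨b, fun h => hne (hΔ.biclique hcomp hbip hchordal hB hx hz hb hxb h),
        hxb.symm, hxy, B, A, hB, hA, hBA, hAB, Or.inr ⟨hb, hx, hy⟩⟩
    · obtain ⟨d', hd', he, hn⟩ := (key A B hA hB hAB).2 y hy
      have hx' : x ∈ X.neighborSet d' ∩ A := by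
        rw [← he]
        exact ⟨hxy.symm, hx⟩
      exact ⟨d', fun h => hn (hΔ.biclique hcomp hbip hchordal hB hd' hy hz h hyz.symm),
        hx'.1, hxy, A, B, hA, hB, hAB, hBA, Or.inl ⟨hd', hy, hx, hn⟩⟩
end

section
/- Let X be a chordal bipartite graph whose vertex set is partitioned into three pairwise disjoint sets Δ, Γ, Λ with Δ nonempty, such that every edge of X joins Δ to Γ∪Λ (i.e., X is bipartite with parts Δ and Γ∪Λ). Suppose every vertex of Δ has at least one neighbor in Γ and at least one neighbor in Λ. Then there exist vertices β ∈ Γ and λ ∈ Λ, each with nonempty neighborhood, such that N(β) ⊆ N(λ) or N(λ) ⊆ N(β), where N denotes the neighborhood in X. -/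
open SimpleGraph

theorem geodesic {V : Type*} (H : SimpleGraph V) (hc : H.Connected) (s t : V) :
    ∃ q : ℕ → V, q 0 = s ∧ q (H.dist s t) = t ∧
      (∀ i j, i ≤ H.dist s t → j ≤ H.dist s t → q i = q j → i = j) ∧
      (∀ i j, i ≤ H.dist s t → j ≤ H.dist s t → (H.Adj (q i) (q j) ↔ (i + 1 = j ∨ j + 1 = i))) := by
  obtain ⟨p, hp⟩ := hc.exists_walk_length_eq_dist s t
  have hd : ∀ i, i ≤ H.dist s t → H.dist s (p.getVert i) = i := by
    intro i hi
    have h1 := SimpleGraph.dist_le (p.take i)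
    have h2 := SimpleGraph.dist_le (p.drop i)
    have h3 := hc.dist_triangle (u := s) (v := p.getVert i) (w := t)
    simp only [SimpleGraph.Walk.take_length, SimpleGraph.Walk.drop_length] at h1 h2
    omega
  refine ⟨p.getVert, by simp, by rw [← hp]; simp, ?_, ?_⟩
  · intro i j hi hj h
    rw [← hd i hi, ← hd j hj, h]
  · intro i j hi hj
    constructor
    · intro h
      have h1 := SimpleGraph.dist_eq_one_iff_adj.2 h
      have h2 := hc.dist_triangle (u := s) (v := p.getVert i) (w := p.getVert j)
      have h3 := hc.dist_triangle (u := s) (v := p.getVert j) (w := p.getVert i)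
      rw [SimpleGraph.dist_comm (u := p.getVert j) (v := p.getVert i)] at h3
      rw [hd i hi, hd j hj, h1] at h2 h3
      have : i ≠ j := by
        rintro rfl
        exact H.loopless.irrefl _ h
      omega
    · rintro (h | h)
      · subst h
        exact p.adj_getVert_succ (by omega)
      · subst h
        exact (p.adj_getVert_succ (by omega)).symm

theorem cycle_adj_val {n : ℕ} (hn : 3 ≤ n) (u v : Fin n) (huv : u.val < v.val) :
    (SimpleGraph.cycleGraph n).Adj u v ↔
      (u.val + 1 = v.val ∨ (u.val = 0 ∧ v.val + 1 = n)) := by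
  rw [SimpleGraph.cycleGraph_adj']
  have h1 : (v - u).val = v.val - u.val := Fin.sub_val_of_le (by
    rw [Fin.le_def]; omega)
  have h2 : (u - v).val = n + u.val - v.val := by
    rw [Fin.sub_def]
    simp only
    rw [Nat.mod_eq_of_lt (by omega)]
    omega
  rw [h1, h2]
  omega

theorem long_cycle {V : Type*} (X : SimpleGraph V) (k : ℕ) (hk : 3 ≤ k) (q : ℕ → V) (a b : V)
    (hinj : ∀ i j, i ≤ k → j ≤ k → q i = q j → i = j)
    (hadj : ∀ i j, i ≤ k → j ≤ k → (X.Adj (q i) (q j) ↔ (i + 1 = j ∨ j + 1 = i)))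
    (hab : X.Adj a b)
    (ha : ∀ i, i ≤ k → (X.Adj (q i) a ↔ i = k))
    (hb : ∀ i, i ≤ k → (X.Adj (q i) b ↔ i = 0))
    (hane : ∀ i, i ≤ k → q i ≠ a) (hbne : ∀ i, i ≤ k → q i ≠ b) :
    ¬ NoLongInducedCycle X := by
  intro hno
  let f : ℕ → V := fun i => if i ≤ k then q i else if i = k + 1 then a else b
  have f1 : ∀ i, i ≤ k → f i = q i := fun i hi => if_pos hi
  have f2 : f (k + 1) = a := by simp [f]
  have f3 : f (k + 2) = b := by simp [f]
  have key : ∀ i j, i < j → j < k + 3 → f i ≠ f j ∧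
      (X.Adj (f i) (f j) ↔ (i + 1 = j ∨ (i = 0 ∧ j + 1 = k + 3))) := by
    intro i j hij hj
    rcases (by omega : j ≤ k ∨ j = k + 1 ∨ j = k + 2) with h | h | h
    · rw [f1 i (by omega), f1 j h]
      refine ⟨fun h' => ?_, ?_⟩
      · have := hinj i j (by omega) h h'
        omega
      · rw [hadj i j (by omega) h]
        omega
    · subst h
      rw [f1 i (by omega), f2, ha i (by omega)]
      refine ⟨hane i (by omega), by omega⟩
    · subst h
      rw [f3]
      rcases (by omega : i ≤ k ∨ i = k + 1) with h | h
      · rw [f1 i h, hb i h]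
        exact ⟨hbne i h, by omega⟩
      · subst h
        rw [f2]
        exact ⟨hab.ne, by simp [hab]⟩
  refine (hno (k + 3) (by omega)).false ⟨⟨fun i => f i.val, ?_⟩, ?_⟩
  · intro i j h
    by_contra hne
    have : i.val ≠ j.val := fun h => hne (Fin.ext h)
    rcases Nat.lt_or_gt_of_ne this with h' | h'
    · exact (key _ _ h' j.isLt).1 h
    · exact (key _ _ h' i.isLt).1 h.symm
  · intro i j
    change X.Adj (f i.val) (f j.val) ↔ _
    rcases Nat.lt_trichotomy i.val j.val with h | h | h
    · rw [(key _ _ h j.isLt).2, cycle_adj_val (by omega) _ _ h]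
    · have : i = j := Fin.ext h
      subst this
      simp
    · rw [SimpleGraph.adj_comm, SimpleGraph.adj_comm (SimpleGraph.cycleGraph _),
        (key _ _ h i.isLt).2, cycle_adj_val (by omega) _ _ h]

theorem insert_conn {V : Type*} (X : SimpleGraph V) (C : Set V) (hC : (X.induce C).Connected)
    (c s : V) (hc : c ∈ C) (hcs : X.Adj c s) : (X.induce (C ∪ {c, s})).Connected :=
  SimpleGraph.induce_union_connected hC.preconnected
    (SimpleGraph.induce_pair_connected_of_adj hcs).preconnected ⟨c, hc, by simp⟩

/-- The separator is complete bipartite. -/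
theorem sep_complete {V : Type*} (X : SimpleGraph V) (P : V → Prop)
    (hP : ∀ u v, X.Adj u v → (P u ↔ ¬ P v)) (hno : NoLongInducedCycle X)
    (C : Set V) (hC : (X.induce C).Connected) (a b s t : V) (hab : X.Adj a b)
    (haC : ∀ c ∈ C, ¬ X.Adj a c) (hbC : ∀ c ∈ C, ¬ X.Adj b c)
    (hs : ∃ c ∈ C, X.Adj c s) (ht : ∃ c ∈ C, X.Adj c t)
    (hsb : X.Adj s b) (hta : X.Adj t a) : X.Adj s t := by
  by_contra hst
  obtain ⟨c, hc, hcs⟩ := hs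
  obtain ⟨d, hd, hdt⟩ := ht
  have hsC : (X.induce (C ∪ {c, s})).Connected := insert_conn X C hC c s hc hcs
  have hT := insert_conn X _ hsC d t (Or.inl hd) hdt
  set T : Set V := (C ∪ {c, s}) ∪ {d, t} with hTdef
  have hTmem : ∀ x ∈ T, x ∈ C ∨ x = s ∨ x = t := by
    intro x hx
    simp only [hTdef, Set.mem_union, Set.mem_insert_iff, Set.mem_singleton_iff] at hx
    rcases hx with (h | h | h) | h | h
    · exact Or.inl h
    · exact Or.inl (h ▸ hc)
    · exact Or.inr (Or.inl h)
    · exact Or.inl (h ▸ hd)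
    · exact Or.inr (Or.inr h)
  have hsT : s ∈ T := by simp [hTdef]
  have htT : t ∈ T := by simp [hTdef]
  obtain ⟨q, q0, qk, qinj, qadj⟩ := geodesic _ hT ⟨s, hsT⟩ ⟨t, htT⟩
  set k := (X.induce T).dist ⟨s, hsT⟩ ⟨t, htT⟩
  have q0' : (q 0).val = s := by rw [q0]
  have qk' : (q k).val = t := by rw [qk]
  have e1 := hP _ _ hsb
  have e2 := hP _ _ hab
  have e3 := hP _ _ hta
  have hadj : ∀ i j, i ≤ k → j ≤ k →
      (X.Adj (q i).val (q j).val ↔ (i + 1 = j ∨ j + 1 = i)) := fun i j hi hj => by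
    rw [← qadj i j hi hj]; rfl
  have hk : 3 ≤ k := by
    by_contra hk
    rcases (by omega : k = 0 ∨ k = 1 ∨ k = 2) with h | h | h
    · rw [h, q0'] at qk'
      subst qk'
      tauto
    · rw [h] at qk'
      apply hst
      rw [← q0', ← qk']
      exact (hadj 0 1 (by omega) (by omega)).2 (by omega)
    · rw [h] at qk'
      have h1 := hP _ _ ((hadj 0 1 (by omega) (by omega)).2 (by omega))
      have h2 := hP _ _ ((hadj 1 2 (by omega) (by omega)).2 (by omega))
      rw [q0'] at h1
      rw [qk'] at h2
      tauto
  have hqs : ∀ i, i ≤ k → (q i).val = s → i = 0 := fun i hi h =>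
    qinj i 0 hi (by omega) (Subtype.ext (by rw [h, q0']))
  have hqt : ∀ i, i ≤ k → (q i).val = t → i = k := fun i hi h =>
    qinj i k hi le_rfl (Subtype.ext (by rw [h, qk']))
  have hsa : ¬ X.Adj s a := fun h => by
    have := hP _ _ h
    tauto
  have htb : ¬ X.Adj t b := fun h => by
    have := hP _ _ h
    tauto
  refine long_cycle X k hk (fun i => (q i).val) a b ?_ hadj hab ?_ ?_ ?_ ?_ hno
  · intro i j hi hj h
    exact qinj i j hi hj (Subtype.ext h)
  · intro i hi
    refine ⟨fun h => ?_, ?_⟩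
    · rcases hTmem _ (q i).2 with h' | h' | h'
      · exact absurd h.symm (haC _ h')
      · exact absurd (h' ▸ h) hsa
      · exact hqt i hi h'
    · rintro rfl
      simpa only [qk'] using hta
  · intro i hi
    refine ⟨fun h => ?_, ?_⟩
    · rcases hTmem _ (q i).2 with h' | h' | h'
      · exact absurd h.symm (hbC _ h')
      · exact hqs i hi h'
      · exact absurd (h' ▸ h) htb
    · rintro rfl
      simpa only [q0'] using hsb
  · intro i hi h
    rcases hTmem _ (q i).2 with h' | h' | h'
    · exact hbC _ h' (h ▸ hab.symm)
    · exact haC c hc ((h'.symm.trans h) ▸ hcs.symm)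
    · exact hta.ne (h'.symm.trans h)
  · intro i hi h
    rcases hTmem _ (q i).2 with h' | h' | h'
    · exact haC _ h' (h ▸ hab)
    · exact hsb.ne (h'.symm.trans h)
    · exact hbC d hd ((h'.symm.trans h) ▸ hdt.symm)

theorem exists_bisimplicial : ∀ (n : ℕ) {V : Type*} [Finite V] (X : SimpleGraph V) (P : V → Prop),
    Nat.card V = n → (∀ u v, X.Adj u v → (P u ↔ ¬ P v)) → NoLongInducedCycle X →
    (∃ a b, X.Adj a b) →
    ∃ a b, X.Adj a b ∧ ∀ x y, X.Adj a x → X.Adj b y → X.Adj x y := by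
  intro n
  induction n using Nat.strong_induction_on with
  | _ n ih =>
  intro V _ X P hn hP hno hedge
  let S : Set (Set V) := {C | (X.induce C).Connected ∧ ∃ a b, X.Adj a b ∧
    (∀ c ∈ C, ¬ X.Adj a c) ∧ (∀ c ∈ C, ¬ X.Adj b c)}
  by_cases hS : S.Nonempty
  · obtain ⟨C, hCmax⟩ := (Set.toFinite S).exists_maximal hS
    obtain ⟨hC, a, b, hab, haC, hbC⟩ := hCmax.prop
    -- every vertex outside adjacent to the set is adjacent to an endpoint of every far edge
    have hmax : ∀ a' b' s, X.Adj a' b' → (∀ c ∈ C, ¬ X.Adj a' c) → (∀ c ∈ C, ¬ X.Adj b' c) →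
        s ∉ C → (∃ c ∈ C, X.Adj c s) → X.Adj a' s ∨ X.Adj b' s := by
      rintro a' b' s hab' ha' hb' hsC ⟨c, hc, hcs⟩
      by_contra hcon
      push Not at hcon
      have hmem : C ∪ {c, s} ∈ S := by
        refine ⟨insert_conn X C hC c s hc hcs, a', b', hab', ?_, ?_⟩
        · rintro x (hx | hx | hx)
          · exact ha' x hx
          · exact hx ▸ ha' c hc
          · exact hx ▸ hcon.1
        · rintro x (hx | hx | hx)
          · exact hb' x hx
          · exact hx ▸ hb' c hc
          · exact hx ▸ hcon.2
      have := hCmax.le_of_ge hmem Set.subset_union_left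
      exact hsC (this (by simp))
    let D : Set V := {v | v ∉ C ∧ ∀ c ∈ C, ¬ X.Adj v c}
    have haD : a ∈ D := ⟨fun h => hbC a h hab.symm, haC⟩
    have hbD : b ∈ D := ⟨fun h => haC b h hab, hbC⟩
    obtain ⟨⟨c0, hc0⟩⟩ := hC.nonempty
    have hcard : Nat.card D < n := by
      rw [← hn]
      exact Set.ncard_univ V ▸ Set.ncard_lt_ncard
        (Set.ssubset_univ_iff.2 (fun h => (h ▸ Set.mem_univ c0 : c0 ∈ D).1 hc0))
    have hnoD : NoLongInducedCycle (X.induce D) := fun m hm =>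
      ⟨fun e => (hno m hm).false (e.trans (SimpleGraph.Embedding.induce D))⟩
    obtain ⟨⟨a', ha'⟩, ⟨b', hb'⟩, hab', hbis⟩ := ih _ hcard (X.induce D) (fun v => P v.val) rfl
      (fun u v h => hP _ _ h) hnoD ⟨⟨a, haD⟩, ⟨b, hbD⟩, hab⟩
    replace hab' : X.Adj a' b' := hab'
    have hbis' : ∀ x y, x ∈ D → y ∈ D → X.Adj a' x → X.Adj b' y → X.Adj x y :=
      fun x y hx hy h1 h2 => hbis ⟨x, hx⟩ ⟨y, hy⟩ h1 h2
    -- neighbours of members of D are in D or in the separator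
    have hsplit : ∀ u ∈ D, ∀ x, X.Adj u x → x ∈ D ∨ (x ∉ C ∧ ∃ c ∈ C, X.Adj c x) := by
      intro u hu x hux
      have hxC : x ∉ C := fun h => hu.2 x h hux
      by_cases h : ∃ c ∈ C, X.Adj c x
      · exact Or.inr ⟨hxC, h⟩
      · exact Or.inl ⟨hxC, fun c hc hxc => h ⟨c, hc, hxc.symm⟩⟩
    refine ⟨a', b', hab', ?_⟩
    intro x y hax hby
    have p1 := hP _ _ hab'
    have p2 := hP _ _ hax
    have p3 := hP _ _ hby
    rcases hsplit a' ha' x hax with hx | ⟨hxC, hx⟩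
    · rcases hsplit b' hb' y hby with hy | ⟨hyC, hy⟩
      · exact hbis' x y hx hy hax hby
      · rcases hmax a' x y hax ha'.2 hx.2 hyC hy with h | h
        · have := hP _ _ h
          tauto
        · exact h
    · rcases hsplit b' hb' y hby with hy | ⟨hyC, hy⟩
      · rcases hmax b' y x hby hb'.2 hy.2 hxC hx with h | h
        · have := hP _ _ h
          tauto
        · exact h.symm
      · exact (sep_complete X P hP hno C hC a' b' y x hab' ha'.2 hb'.2 hy hx
          hby.symm hax.symm).symm
  · obtain ⟨a, b, hab⟩ := hedge
    refine ⟨a, b, hab, ?_⟩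
    intro x y hax hby
    by_contra hxy
    refine hS ⟨{y}, ?_, a, x, hax, ?_, ?_⟩
    · have : Unique ({y} : Set V) := Set.uniqueSingleton y
      exact { preconnected := SimpleGraph.Preconnected.of_subsingleton, nonempty := ⟨⟨y, rfl⟩⟩ }
    · rintro c rfl h
      have p1 := hP _ _ hab
      have p2 := hP _ _ hby
      have p3 := hP _ _ h
      tauto
    · rintro c rfl h
      exact hxy h

theorem stmt_10 {V : Type*} [Fintype V] (X : SimpleGraph V) (Δ Γ Λ : Set V)
    (hdisjΔΓ : Disjoint Δ Γ) (hdisjΔΛ : Disjoint Δ Λ) (hdisjΓΛ : Disjoint Γ Λ)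
    (hcover : ∀ v, v ∈ Δ ∨ v ∈ Γ ∨ v ∈ Λ)
    (hΔne : Δ.Nonempty)
    (hbip : ∀ u v, X.Adj u v →
      (u ∈ Δ ∧ (v ∈ Γ ∨ v ∈ Λ)) ∨ (v ∈ Δ ∧ (u ∈ Γ ∨ u ∈ Λ)))
    (hchordal : NoLongInducedCycle X)
    (hnbrΓ : ∀ u ∈ Δ, ∃ v ∈ Γ, X.Adj u v)
    (hnbrΛ : ∀ u ∈ Δ, ∃ v ∈ Λ, X.Adj u v) :
    ∃ β ∈ Γ, ∃ lam ∈ Λ, (X.neighborSet β).Nonempty ∧ (X.neighborSet lam).Nonempty ∧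
      (X.neighborSet β ⊆ X.neighborSet lam ∨ X.neighborSet lam ⊆ X.neighborSet β) := by
  have hP : ∀ u v, X.Adj u v → (u ∈ Δ ↔ ¬ v ∈ Δ) := by
    intro u v h
    have d1 : ∀ x, x ∈ Δ → x ∉ Γ := fun x hx => Set.disjoint_left.1 hdisjΔΓ hx
    have d2 : ∀ x, x ∈ Δ → x ∉ Λ := fun x hx => Set.disjoint_left.1 hdisjΔΛ hx
    have := d1 u
    have := d1 v
    have := d2 u
    have := d2 v
    have := hbip u v h
    tauto
  have main : ∃ a b, a ∈ Δ ∧ X.Adj a b ∧ ∀ x y, X.Adj a x → X.Adj b y → X.Adj x y := by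
    obtain ⟨u, hu⟩ := hΔne
    obtain ⟨v, -, huv⟩ := hnbrΓ u hu
    obtain ⟨a, b, hab, h⟩ := exists_bisimplicial _ X (fun v => v ∈ Δ) rfl hP hchordal ⟨u, v, huv⟩
    by_cases ha : a ∈ Δ
    · exact ⟨a, b, ha, hab, h⟩
    · refine ⟨b, a, ?_, hab.symm, fun x y hx hy => (h y x hy hx).symm⟩
      by_contra hb
      exact ha ((hP _ _ hab).2 hb)
  obtain ⟨a, b, ha, hab, h⟩ := main
  have hbΔ := (hP _ _ hab).1 ha
  rcases hcover b with hb | hb | hb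
  · exact absurd hb hbΔ
  · obtain ⟨l, hl, hal⟩ := hnbrΛ a ha
    exact ⟨b, hb, l, hl, ⟨a, hab.symm⟩, ⟨a, hal.symm⟩, Or.inl fun y hy => h l y hal hy⟩
  · obtain ⟨g, hg, hag⟩ := hnbrΓ a ha
    exact ⟨g, hg, b, hb, ⟨a, hag.symm⟩, ⟨a, hab.symm⟩, Or.inr fun y hy => h g y hag hy⟩
end

section
/- Let X be a connected chordal bipartite T_2-free graph, let α be a vertex of X, and let (Ω,S) be a coherent configuration on the vertex set Ω of X compatible with X in which α is distinguished. Then for all distinct fibers Δ and Γ of (Ω,S), ‖e_{Δ,Γ}‖ ≤ 2. -/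
open SimpleGraph

/-- The bipartite claw `T₂`: the tree on 7 vertices obtained from the star `K_{1,3}`
by subdividing each edge once (center 0, middle vertices 1,2,3, leaves 4,5,6). -/
def bipartiteClaw : SimpleGraph (Fin 7) :=
  SimpleGraph.fromRel (fun a b =>
    (a, b) ∈ ({(0, 1), (0, 2), (0, 3), (1, 4), (2, 5), (3, 6)} : Set (Fin 7 × Fin 7)))

/-- `X` contains no induced subgraph isomorphic to the bipartite claw `T₂`. -/
def T2Free {V : Type*} (X : SimpleGraph V) : Prop :=
  IsEmpty (bipartiteClaw ↪g X)

namespace CC12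

lemma T2_contra {V : Type*} (X : SimpleGraph V) (hT2 : T2Free X)
    (c a1 a2 a3 b1 b2 b3 : V)
    (h1 : X.Adj c a1) (h2 : X.Adj c a2) (h3 : X.Adj c a3)
    (k1 : X.Adj a1 b1) (k2 : X.Adj a2 b2) (k3 : X.Adj a3 b3)
    (n1 : ¬ X.Adj c b1) (n2 : ¬ X.Adj c b2) (n3 : ¬ X.Adj c b3)
    (n4 : ¬ X.Adj a1 a2) (n5 : ¬ X.Adj a1 a3) (n6 : ¬ X.Adj a2 a3)
    (n7 : ¬ X.Adj b1 b2) (n8 : ¬ X.Adj b1 b3) (n9 : ¬ X.Adj b2 b3)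
    (n10 : ¬ X.Adj a1 b2) (n11 : ¬ X.Adj a1 b3) (n12 : ¬ X.Adj a2 b1)
    (n13 : ¬ X.Adj a2 b3) (n14 : ¬ X.Adj a3 b1) (n15 : ¬ X.Adj a3 b2) : False := by
  let f : Fin 7 → V := ![c, a1, a2, a3, b1, b2, b3]
  have hadj : ∀ i j, X.Adj (f i) (f j) ↔ bipartiteClaw.Adj i j := by
    intro i j
    fin_cases i <;> fin_cases j <;>
      simp [f, bipartiteClaw, h1, h2, h3, k1, k2, k3, n1, n2, n3, n4, n5, n6, n7, n8, n9, n10,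
        n11, n12, n13, n14, n15, h1.symm, h2.symm, h3.symm, k1.symm, k2.symm, k3.symm,
        mt SimpleGraph.Adj.symm n1, mt SimpleGraph.Adj.symm n2, mt SimpleGraph.Adj.symm n3, mt SimpleGraph.Adj.symm n4, mt SimpleGraph.Adj.symm n5, mt SimpleGraph.Adj.symm n6,
        mt SimpleGraph.Adj.symm n7, mt SimpleGraph.Adj.symm n8, mt SimpleGraph.Adj.symm n9, mt SimpleGraph.Adj.symm n10, mt SimpleGraph.Adj.symm n11,
        mt SimpleGraph.Adj.symm n12, mt SimpleGraph.Adj.symm n13, mt SimpleGraph.Adj.symm n14, mt SimpleGraph.Adj.symm n15]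
  have hinj : Function.Injective f := by
    intro i j hij
    have h : ∀ k, bipartiteClaw.Adj i k ↔ bipartiteClaw.Adj j k := by
      intro k
      rw [← hadj, ← hadj, hij]
    have h1 := h 0
    have h2 := h 1
    have h3 := h 2
    have h4 := h 3
    have h5 := h 4
    have h6 := h 5
    have h7 := h 6
    clear h hij hadj
    revert h1 h2 h3 h4 h5 h6 h7
    fin_cases i <;> fin_cases j <;> simp [bipartiteClaw]
  exact hT2.false ⟨⟨f, hinj⟩, fun {i j} => hadj i j⟩

/-- `f 0, …, f (n-1)` is an induced path inside `W`. -/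
def IndPath {V : Type*} (X : SimpleGraph V) (W : Set V) (n : ℕ) (f : ℕ → V) : Prop :=
  (∀ i < n, f i ∈ W) ∧ (∀ i < n, ∀ j < n, f i = f j → i = j) ∧
    ∀ i < n, ∀ j < n, (X.Adj (f i) (f j) ↔ (i + 1 = j ∨ j + 1 = i))

lemma extend {V : Type*} (X : SimpleGraph V) (P Q : Set V) (hbip : IsBipartition X P Q)
    (hch : NoLongInducedCycle X) (W : Set V)
    (hK : ∀ u ∈ W, ∀ v ∈ W, ∀ w ∈ W, ∀ z ∈ W, X.Adj u v → X.Adj v w → X.Adj w z → ¬ X.Adj u z →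
      ∃ y ∈ W, X.Adj u y ∧ ¬ X.Adj w y)
    (n : ℕ) (hn : 4 ≤ n) (f : ℕ → V) (hf : IndPath X W n f) :
    ∃ g, IndPath X W (n + 1) g := by
  obtain ⟨hW, hinj, hadj⟩ := hf
  have a01 : X.Adj (f 0) (f 1) := (hadj 0 (by omega) 1 (by omega)).2 (by omega)
  have a12 : X.Adj (f 1) (f 2) := (hadj 1 (by omega) 2 (by omega)).2 (by omega)
  have a23 : X.Adj (f 2) (f 3) := (hadj 2 (by omega) 3 (by omega)).2 (by omega)
  have a03 : ¬ X.Adj (f 0) (f 3) := by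
    rw [hadj 0 (by omega) 3 (by omega)]; omega
  obtain ⟨w, hwW, hw0, hw2⟩ := hK _ (hW 0 (by omega)) _ (hW 1 (by omega)) _ (hW 2 (by omega)) _
    (hW 3 (by omega)) a01 a12 a23 a03
  have hc : ∀ u v, X.Adj u v → (u ∈ P ↔ ¬ v ∈ P) := by
    intro u v h
    have hd := Set.disjoint_left.1 hbip.2.1
    rcases hbip.2.2 u v h with ⟨p, q⟩ | ⟨p, q⟩
    · exact ⟨fun _ h => hd h q, fun _ => p⟩
    · exact ⟨fun h => (hd h p).elim, fun h => (h q).elim⟩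
  have c01 := hc _ _ a01
  have c12 := hc _ _ a12
  have c23 := hc _ _ a23
  have c0w := hc _ _ hw0
  have hw1 : ¬ X.Adj w (f 1) := fun h => by
    have := hc _ _ h; tauto
  have hw3 : ¬ X.Adj w (f 3) := fun h => by
    have := hc _ _ h; tauto
  have hwne : ∀ i < n, f i ≠ w := by
    intro i hi h
    subst h
    rw [hadj 0 (by omega) i hi] at hw0
    have : i = 1 := by omega
    subst this
    exact hw2 a12.symm
  let g : ℕ → V := fun i => Nat.casesOn i w f
  have g0 : g 0 = w := rfl
  have gs : ∀ i, g (i + 1) = f i := fun i => rfl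
  have ginj : ∀ i < n + 1, ∀ j < n + 1, g i = g j → i = j := by
    intro i hi j hj h
    rcases i with _ | i <;> rcases j with _ | j
    · rfl
    · exact absurd h.symm (hwne j (by omega))
    · exact absurd h (hwne i (by omega))
    · have := hinj i (by omega) j (by omega) h
      omega
  have key : ∀ j, 1 ≤ j → j < n → ¬ X.Adj w (f j) := by
    intro j
    induction j using Nat.strong_induction_on with
    | _ j ih =>
      intro hj1 hjn h
      have hj4 : 4 ≤ j := by
        by_contra hlt
        have : j = 1 ∨ j = 2 ∨ j = 3 := by omega
        rcases this with rfl | rfl | rfl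
        · exact hw1 h
        · exact hw2 h.symm
        · exact hw3 h
      refine (hch (j + 2) (by omega)).false ⟨⟨fun i : Fin (j + 2) => g i, ?_⟩, ?_⟩
      · intro a b hab
        exact Fin.ext (ginj a (by omega) b (by omega) hab)
      · intro a b
        have hww : ∀ i, i ≤ j → (X.Adj w (f i) ↔ i = 0 ∨ i = j) := by
          intro i hi
          constructor
          · intro h'
            by_contra hcon
            exact ih i (by omega) (by omega) (by omega) h'
          · rintro (rfl | rfl)
            · exact hw0.symm
            · exact h
        show X.Adj (g a) (g b) ↔ _
        have hcyc : (SimpleGraph.cycleGraph (j + 2)).Adj a b ↔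
            ((a : ℕ) + 1 = b ∨ (b : ℕ) + 1 = a ∨ ((a : ℕ) = 0 ∧ (b : ℕ) = j + 1) ∨
              ((b : ℕ) = 0 ∧ (a : ℕ) = j + 1)) := by
          rw [SimpleGraph.cycleGraph_adj']
          have ha := a.2
          have hb := b.2
          rw [Fin.val_sub, Fin.val_sub]
          rcases lt_trichotomy (a : ℕ) b with hlt | heq | hlt
          · have e1 : (j + 2 - (b : ℕ) + a) % (j + 2) = j + 2 - b + a := Nat.mod_eq_of_lt (by omega)
            have e2 : (j + 2 - (a : ℕ) + b) % (j + 2) = b - a := by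
              rw [show j + 2 - (a : ℕ) + b = (b - a) + (j + 2) by omega, Nat.add_mod_right]
              exact Nat.mod_eq_of_lt (by omega)
            rw [e1, e2]; omega
          · rw [heq, show j + 2 - (b : ℕ) + b = j + 2 by omega, Nat.mod_self]; omega
          · have e1 : (j + 2 - (a : ℕ) + b) % (j + 2) = j + 2 - a + b := Nat.mod_eq_of_lt (by omega)
            have e2 : (j + 2 - (b : ℕ) + a) % (j + 2) = a - b := by
              rw [show j + 2 - (b : ℕ) + a = (a - b) + (j + 2) by omega, Nat.add_mod_right]
              exact Nat.mod_eq_of_lt (by omega)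
            rw [e1, e2]; omega
        rw [hcyc]
        have ha := a.2
        have hb := b.2
        clear hcyc
        revert ha hb
        generalize (a : ℕ) = a
        generalize (b : ℕ) = b
        intro ha hb
        rcases a with _ | a <;> rcases b with _ | b
        · simp [g0]
        · rw [g0, gs, hww b (by omega)]; omega
        · rw [g0, gs, X.adj_comm, hww a (by omega)]; omega
        · simp only [gs]
          rw [hadj a (by omega) b (by omega)]; omega
  have hww : ∀ i < n, (X.Adj w (f i) ↔ i = 0) := by
    intro i hi
    constructor
    · intro h
      by_contra h0
      exact key i (by omega) hi h
    · rintro rfl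
      exact hw0.symm
  refine ⟨g, ?_, ginj, ?_⟩
  · intro i hi
    rcases i with _ | i
    · exact hwW
    · exact hW i (by omega)
  · intro a ha b hb
    rcases a with _ | a <;> rcases b with _ | b
    · simp [g0]
    · rw [g0, gs, hww b (by omega)]; omega
    · rw [g0, gs, X.adj_comm, hww a (by omega)]; omega
    · rw [gs, gs, hadj a (by omega) b (by omega)]; omega

lemma no_P4 {V : Type*} [Fintype V] (X : SimpleGraph V) (P Q : Set V)
    (hbip : IsBipartition X P Q)
    (hch : NoLongInducedCycle X) (W : Set V)
    (hK : ∀ u ∈ W, ∀ v ∈ W, ∀ w ∈ W, ∀ z ∈ W, X.Adj u v → X.Adj v w → X.Adj w z → ¬ X.Adj u z →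
      ∃ y ∈ W, X.Adj u y ∧ ¬ X.Adj w y)
    (f : ℕ → V) (hf : IndPath X W 4 f) : False := by
  have h : ∀ n, ∃ g, IndPath X W (n + 4) g := by
    intro n
    induction n with
    | zero => exact ⟨f, hf⟩
    | succ n ih =>
      obtain ⟨g, hg⟩ := ih
      obtain ⟨g', hg'⟩ := extend X P Q hbip hch W hK (n + 4) (by omega) g hg
      exact ⟨g', by rwa [show n + 1 + 4 = n + 4 + 1 by omega]⟩
  obtain ⟨g, hg⟩ := h (Fintype.card V)
  have := Fintype.card_le_of_injective (fun i : Fin (Fintype.card V + 4) => g i)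
    (fun a b hab => Fin.ext (hg.2.1 a a.2 b b.2 hab))
  simp at this

section config
variable {Ω : Type*} [Fintype Ω] (C : CoherentConfiguration Ω)

/-- The colour (basis relation) of a pair. -/
noncomputable def col (p : Ω × Ω) : Set (Ω × Ω) := (C.partition p).choose

lemma col_mem (p : Ω × Ω) : col C p ∈ C.S := (C.partition p).choose_spec.1.1

lemma mem_col (p : Ω × Ω) : p ∈ col C p := (C.partition p).choose_spec.1.2

lemma col_eq {p : Ω × Ω} {s : Set (Ω × Ω)} (hs : s ∈ C.S) : p ∈ s ↔ col C p = s := by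
  constructor
  · intro h
    exact ((C.partition p).choose_spec.2 s ⟨hs, h⟩).symm
  · rintro rfl
    exact mem_col C p

lemma col_snd {a b a' b' : Ω} (h : col C (a, b) = col C (a', b')) :
    col C (b, b) = col C (b', b') := by
  have hr := C.regularity _ (col_mem C (a, b)) _ (col_mem C (b, b)) _ (col_mem C (a, b))
    (a, b) (mem_col C _) (a', b') (by rw [h]; exact mem_col C _)
  have hpos : 0 < {γ : Ω | (a, γ) ∈ col C (a, b) ∧ (γ, b) ∈ col C (b, b)}.ncard :=
    (Set.ncard_pos (Set.toFinite _)).2 ⟨b, mem_col C _, mem_col C _⟩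
  rw [hr] at hpos
  obtain ⟨γ, h1, h2⟩ := (Set.ncard_pos (Set.toFinite _)).1 hpos
  have h3 : γ = b' := C.diag_union _ (col_mem C (b, b)) ⟨(b, b), mem_col C _, rfl⟩ _ h2
  subst h3
  exact ((col_eq C (col_mem C _)).1 h2).symm

lemma count {u v : Ω} (h : col C (u, u) = col C (v, v)) (s : Set (Ω × Ω)) :
    {γ : Ω | col C (u, γ) = s}.ncard = {γ : Ω | col C (v, γ) = s}.ncard := by
  by_cases hs : s ∈ C.S
  · have hr := C.regularity _ hs _ (C.converse_mem s hs) _ (col_mem C (u, u))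
      (u, u) (mem_col C _) (v, v) (by rw [h]; exact mem_col C _)
    simpa [col_eq C hs] using hr
  · have : ∀ p, col C p ≠ s := fun p hp => hs (hp ▸ col_mem C p)
    simp [this]

lemma transfer {u v : Ω} (h : col C (u, u) = col C (v, v)) (w : Ω) :
    ∃ w', col C (u, w) = col C (v, w') := by
  have hpos : 0 < {γ : Ω | col C (u, γ) = col C (u, w)}.ncard :=
    (Set.ncard_pos (Set.toFinite _)).2 ⟨w, rfl⟩
  rw [count C h] at hpos
  obtain ⟨γ, h1⟩ := (Set.ncard_pos (Set.toFinite _)).1 hpos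
  exact ⟨γ, h1.symm⟩

lemma count_pred {u v : Ω} (h : col C (u, u) = col C (v, v)) (R : Set (Ω × Ω) → Prop) :
    {γ : Ω | R (col C (u, γ))}.ncard = {γ : Ω | R (col C (v, γ))}.ncard := by
  classical
  have key : ∀ x : Ω, {γ : Ω | R (col C (x, γ))}.ncard =
      ∑ s : Set (Ω × Ω), if R s then {γ : Ω | col C (x, γ) = s}.ncard else 0 := by
    intro x
    rw [Set.ncard_eq_toFinset_card', Finset.card_eq_sum_card_fiberwise
      (f := fun γ => col C (x, γ)) (t := Finset.univ) (by intro a _; simp)]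
    refine Finset.sum_congr rfl fun s _ => ?_
    split_ifs with hs
    · rw [Set.ncard_eq_toFinset_card']
      congr 1
      ext γ
      simp only [Finset.mem_filter, Set.mem_toFinset, Set.mem_ofPred_eq]
      constructor
      · exact fun h => h.2
      · rintro rfl
        exact ⟨hs, rfl⟩
    · rw [Finset.card_eq_zero]
      ext γ
      simp only [Finset.mem_filter, Set.mem_toFinset, Set.mem_ofPred_eq, Finset.notMem_empty,
        iff_false]
      rintro ⟨h1, rfl⟩
      exact hs h1
  rw [key, key]
  exact Finset.sum_congr rfl fun s _ => by rw [count C h]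

variable (X : SimpleGraph Ω) (hcomp : C.Compatible X)

/-- The fibre of a point. -/
def fib (x : Ω) : Set Ω := {y | col C (y, y) = col C (x, x)}

include hcomp in
lemma adj_of_col {a b a' b' : Ω} (h : col C (a, b) = col C (a', b')) (hab : X.Adj a b) :
    X.Adj a' b' :=
  hcomp _ (col_mem C (a, b)) ⟨(a, b), mem_col C _, hab⟩ (a', b') (by rw [h]; exact mem_col C _)

include hcomp in
lemma deg {u v : Ω} (h : col C (u, u) = col C (v, v)) (b : Ω) :
    (X.neighborSet u ∩ fib C b).ncard = (X.neighborSet v ∩ fib C b).ncard := by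
  have key : ∀ x, X.neighborSet x ∩ fib C b = {γ : Ω | (fun s => ∃ y z, col C (y, z) = s ∧
      X.Adj y z ∧ z ∈ fib C b) (col C (x, γ))} := by
    intro x
    ext γ
    constructor
    · rintro ⟨h1, h2⟩
      exact ⟨x, γ, rfl, h1, h2⟩
    · rintro ⟨y, z, h1, h2, h3⟩
      refine ⟨adj_of_col C X hcomp h1 h2, ?_⟩
      have := col_snd C h1
      exact this.symm.trans h3
  rw [key, key]
  exact count_pred C h (fun s => ∃ y z, col C (y, z) = s ∧ X.Adj y z ∧ z ∈ fib C b)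

include hcomp in
lemma deg_swap {u v b z : Ω} (h : col C (u, u) = col C (v, v)) (hz : z ∈ fib C b)
    (hvz : X.Adj v z) (huz : ¬ X.Adj u z) : ∃ y ∈ fib C b, X.Adj u y ∧ ¬ X.Adj v y := by
  by_contra hcon
  push Not at hcon
  have hsub : X.neighborSet u ∩ fib C b ⊆ X.neighborSet v ∩ fib C b :=
    fun y hy => ⟨hcon y hy.2 hy.1, hy.2⟩
  have := Set.eq_of_subset_of_ncard_le hsub (deg C X hcomp h b).ge (Set.toFinite _)
  have h2 : z ∈ X.neighborSet u ∩ fib C b := this ▸ ⟨hvz, hz⟩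
  exact huz h2.1

include hcomp in
lemma adj_transfer {u v w : Ω} (h : v ∈ fib C u) (huw : X.Adj u w) :
    ∃ w' ∈ fib C w, X.Adj v w' := by
  obtain ⟨w', hw'⟩ := transfer C h.symm w
  exact ⟨w', (col_snd C hw').symm, adj_of_col C X hcomp hw' huw⟩

variable (α : Ω) (hdist : C.Distinguished α) (hconn : X.Connected)

include hcomp hdist in
lemma reach_inv (n : ℕ) : ∀ u v : Ω, v ∈ fib C u → (∃ p : X.Walk u α, p.length = n) →
    ∃ p : X.Walk v α, p.length = n := by
  induction n with
  | zero =>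
    rintro u v h ⟨p, hp⟩
    have := SimpleGraph.Walk.eq_of_length_eq_zero hp
    subst this
    have h1 : col C (u, u) = {(u, u)} := (col_eq C hdist).1 rfl
    have h2 := mem_col C (v, v)
    have h3 : col C (v, v) = col C (u, u) := h
    rw [h3, h1] at h2
    have : v = u := congrArg Prod.fst h2
    subst this
    exact ⟨.nil, rfl⟩
  | succ n ih =>
    rintro u v h ⟨p, hp⟩
    cases p with
    | nil => simp at hp
    | @cons _ w _ hadj q =>
      obtain ⟨w', hw', ha⟩ := adj_transfer C X hcomp h hadj
      obtain ⟨q', hq'⟩ := ih w w' hw' ⟨q, by simpa using hp⟩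
      exact ⟨.cons ha q', by simp [hq']⟩

include hcomp hdist hconn in
lemma dist_inv {u v : Ω} (h : v ∈ fib C u) : X.dist u α = X.dist v α := by
  apply le_antisymm
  · obtain ⟨p, hp⟩ := (hconn v α).exists_walk_length_eq_dist
    obtain ⟨q, hq⟩ := reach_inv C X hcomp α hdist _ v u h.symm ⟨p, hp⟩
    rw [← hq]; exact SimpleGraph.dist_le q
  · obtain ⟨p, hp⟩ := (hconn u α).exists_walk_length_eq_dist
    obtain ⟨q, hq⟩ := reach_inv C X hcomp α hdist _ u v h ⟨p, hp⟩
    rw [← hq]; exact SimpleGraph.dist_le q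

lemma walk_parity {V : Type*} (X : SimpleGraph V) (P Q : Set V) (hbip : IsBipartition X P Q)
    {u v : V} (p : X.Walk u v) : (u ∈ P ↔ v ∈ P) ↔ Even p.length := by
  induction p with
  | nil => simp
  | cons h q ih =>
    have hd := Set.disjoint_left.1 hbip.2.1
    rw [SimpleGraph.Walk.length_cons, Nat.even_add_one, ← ih]
    rcases hbip.2.2 _ _ h with ⟨p, q⟩ | ⟨p, q⟩
    · have := fun h => hd h q
      tauto
    · have := fun h => hd h p
      tauto

include hconn in
lemma level {P Q : Set Ω} (hbip : IsBipartition X P Q) {u v : Ω} (h : X.Adj u v) :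
    X.dist u α = X.dist v α + 1 ∨ X.dist v α = X.dist u α + 1 := by
  obtain ⟨p, hp⟩ := (hconn v α).exists_walk_length_eq_dist
  obtain ⟨q, hq⟩ := (hconn u α).exists_walk_length_eq_dist
  have h1 := SimpleGraph.dist_le (SimpleGraph.Walk.cons h p)
  have h2 := SimpleGraph.dist_le (SimpleGraph.Walk.cons h.symm q)
  have e1 := walk_parity X P Q hbip (SimpleGraph.Walk.cons h p)
  have e2 := walk_parity X P Q hbip q
  simp only [SimpleGraph.Walk.length_cons, hp, hq] at h1 h2 e1 e2
  have e3 : Even (X.dist v α + 1) ↔ Even (X.dist u α) := e1.symm.trans e2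
  rw [Nat.even_iff, Nat.even_iff] at e3
  omega

include hconn in
lemma lower {u : Ω} {n : ℕ} (h : X.dist u α = n + 1) : ∃ w, X.Adj u w ∧ X.dist w α = n := by
  obtain ⟨p, hp⟩ := (hconn u α).exists_walk_length_eq_dist
  cases p with
  | nil => simp at h
  | @cons _ w _ ha q =>
    refine ⟨w, ha, ?_⟩
    have h1 := SimpleGraph.dist_le q
    obtain ⟨p', hp'⟩ := (hconn w α).exists_walk_length_eq_dist
    have h2 := SimpleGraph.dist_le (SimpleGraph.Walk.cons ha p')
    simp at hp h2
    omega

include hcomp hdist hconn in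
lemma nested {P Q : Set Ω} (hbip : IsBipartition X P Q) (hch : NoLongInducedCycle X)
    {a b x x' y y' : Ω} (hx : x ∈ fib C a) (hx' : x' ∈ fib C a) (hy : y ∈ fib C b)
    (hy' : y' ∈ fib C b) (h1 : X.Adj x y) (h2 : X.Adj x' y) (h3 : X.Adj x' y') :
    X.Adj x y' := by
  by_contra hcon
  have nf : ∀ c u v, u ∈ fib C c → v ∈ fib C c → ¬ X.Adj u v := by
    intro c u v hu hv h
    have e1 := dist_inv C X hcomp α hdist hconn hu
    have e2 := dist_inv C X hcomp α hdist hconn hv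
    have := level X α hconn hbip h
    omega
  refine no_P4 X P Q hbip hch (fib C a ∪ fib C b) ?_ (fun i => if i = 0 then x else if i = 1 then y
    else if i = 2 then x' else y') ⟨?_, ?_, ?_⟩
  · intro u hu v hv w hw z hz huv hvw hwz huz
    rcases hu with hu | hu
    · have hv : v ∈ fib C b := hv.resolve_left fun h => nf a u v hu h huv
      have hw : w ∈ fib C a := hw.resolve_right fun h => nf b v w hv h hvw
      have hz : z ∈ fib C b := hz.resolve_left fun h => nf a w z hw h hwz
      obtain ⟨y, hy, h⟩ := deg_swap C X hcomp (Eq.trans hu hw.symm) hz hwz huz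
      exact ⟨y, Or.inr hy, h⟩
    · have hv : v ∈ fib C a := hv.resolve_right fun h => nf b u v hu h huv
      have hw : w ∈ fib C b := hw.resolve_left fun h => nf a v w hv h hvw
      have hz : z ∈ fib C a := hz.resolve_right fun h => nf b w z hw h hwz
      obtain ⟨y, hy, h⟩ := deg_swap C X hcomp (Eq.trans hu hw.symm) hz hwz huz
      exact ⟨y, Or.inl hy, h⟩
  · intro i hi
    interval_cases i <;> simp [hx, hx', hy, hy']
  · have n1 : x ≠ y := h1.ne
    have n2 : x ≠ x' := by rintro rfl; exact hcon h3
    have n3 : x ≠ y' := by rintro rfl; exact nf b x y hy' hy h1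
    have n4 : x' ≠ y := h2.ne
    have n5 : y ≠ y' := by rintro rfl; exact hcon h1
    have n6 : x' ≠ y' := h3.ne
    intro i hi j hj
    interval_cases i <;> interval_cases j <;>
      simp [n1, n2, n3, n4, n5, n6, n1.symm, n2.symm, n3.symm, n4.symm, n5.symm, n6.symm]
  · have m1 := nf a x x' hx hx'
    have m2 := nf b y y' hy hy'
    intro i hi j hj
    interval_cases i <;> interval_cases j <;>
      simp [h1, h2, h3, hcon, m1, m2, h1.symm, h2.symm, h3.symm, mt SimpleGraph.Adj.symm hcon,
        mt SimpleGraph.Adj.symm m1, mt SimpleGraph.Adj.symm m2]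

include hconn in
/-- The case of a vertex `c` of level `d` below two vertices of a `3K₂`. -/
lemma case_two {P Q : Set Ω} (hbip : IsBipartition X P Q) (hT2 : T2Free X)
    {d : ℕ} {c l1 l2 u1 u2 c3 : Ω} (hc : X.dist c α = d) (hc3 : X.dist c3 α = d)
    (hne : c ≠ c3)
    (d1 : X.dist l1 α = d + 1) (d2 : X.dist l2 α = d + 1)
    (e1 : X.dist u1 α = d + 2) (e2 : X.dist u2 α = d + 2)
    (a1 : X.Adj c l1) (a2 : X.Adj c l2) (b1 : X.Adj l1 u1) (b2 : X.Adj l2 u2)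
    (n1 : ¬ X.Adj l1 u2) (n2 : ¬ X.Adj l2 u1)
    (n3 : ¬ X.Adj l1 c3) (n4 : ¬ X.Adj l2 c3) : False := by
  have lev : ∀ u v, ¬ (X.dist u α = X.dist v α + 1 ∨ X.dist v α = X.dist u α + 1) → ¬ X.Adj u v :=
    fun u v h h' => h (level X α hconn hbip h')
  rcases d with _ | d
  · apply hne
    rw [hconn.dist_eq_zero_iff] at hc hc3
    rw [hc, hc3]
  · obtain ⟨m, hm, hmd⟩ := lower X α hconn hc
    rcases d with _ | d
    · rw [hconn.dist_eq_zero_iff] at hmd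
      subst hmd
      have hadj : X.Adj m c3 := by
        obtain ⟨w, hw, hwd⟩ := lower X m hconn hc3
        rw [hconn.dist_eq_zero_iff] at hwd
        subst hwd
        exact hw.symm
      have hmm : X.dist m m = 0 := SimpleGraph.dist_self
      refine T2_contra X hT2 c l1 l2 m u1 u2 c3 a1 a2 hm b1 b2 hadj ?_ ?_ ?_ ?_ ?_ ?_ ?_ ?_ ?_
        n1 n3 n2 n4 ?_ ?_ <;> (apply lev; omega)
    · obtain ⟨k, hk, hkd⟩ := lower X α hconn hmd
      refine T2_contra X hT2 c l1 l2 m u1 u2 k a1 a2 hm b1 b2 hk ?_ ?_ ?_ ?_ ?_ ?_ ?_ ?_ ?_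
        n1 ?_ n2 ?_ ?_ ?_ <;> (apply lev; omega)

include hcomp hdist hconn in
lemma main {P Q : Set Ω} (hbip : IsBipartition X P Q) (hch : NoLongInducedCycle X)
    (hT2 : T2Free X) (d : ℕ) : ∀ l1 l2 l3 u1 u2 u3 : Ω, X.dist l1 α = d → X.dist u1 α = d + 1 →
    l2 ∈ fib C l1 → l3 ∈ fib C l1 → u2 ∈ fib C u1 → u3 ∈ fib C u1 →
    X.Adj l1 u1 → X.Adj l2 u2 → X.Adj l3 u3 →
    ¬ X.Adj l1 u2 → ¬ X.Adj l1 u3 → ¬ X.Adj l2 u1 → ¬ X.Adj l2 u3 → ¬ X.Adj l3 u1 →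
    ¬ X.Adj l3 u2 → False := by
  induction d with
  | zero =>
    intro l1 l2 l3 u1 u2 u3 hl hu f2 f3 g2 g3 a1 a2 a3 n12 n13 n21 n23 n31 n32
    have e := dist_inv C X hcomp α hdist hconn f2
    rw [hl] at e
    rw [hconn.dist_eq_zero_iff] at hl
    have e := hconn.dist_eq_zero_iff.1 e.symm
    rw [← hl] at e
    subst e
    exact n12 a2
  | succ d ih =>
    intro l1 l2 l3 u1 u2 u3 hl hu f2 f3 g2 g3 a1 a2 a3 n12 n13 n21 n23 n31 n32
    have lev : ∀ u v, ¬ (X.dist u α = X.dist v α + 1 ∨ X.dist v α = X.dist u α + 1) →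
      ¬ X.Adj u v := fun u v h h' => h (level X α hconn hbip h')
    have dl2 := dist_inv C X hcomp α hdist hconn f2
    have dl3 := dist_inv C X hcomp α hdist hconn f3
    have du2 := dist_inv C X hcomp α hdist hconn g2
    have du3 := dist_inv C X hcomp α hdist hconn g3
    have f1 : l1 ∈ fib C l1 := rfl
    obtain ⟨c1, hc1, dc1⟩ := lower X α hconn hl
    have k1 : c1 ∈ fib C c1 := rfl
    obtain ⟨c2, k2, hc2⟩ := adj_transfer C X hcomp f2 hc1
    obtain ⟨c3, k3, hc3⟩ := adj_transfer C X hcomp f3 hc1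
    have dc2 := dist_inv C X hcomp α hdist hconn k2
    have dc3 := dist_inv C X hcomp α hdist hconn k3
    -- a common neighbour is impossible
    have hall : ∀ c ∈ fib C c1, X.Adj l1 c → X.Adj l2 c → X.Adj l3 c → False := by
      intro c hc h1 h2 h3
      have dc := dist_inv C X hcomp α hdist hconn hc
      refine T2_contra X hT2 c l1 l2 l3 u1 u2 u3 h1.symm h2.symm h3.symm a1 a2 a3 ?_ ?_ ?_ ?_ ?_ ?_
        ?_ ?_ ?_ n12 n13 n21 n23 n31 n32 <;> (apply lev; omega)
    have hnest : ∀ x ∈ fib C l1, ∀ x' ∈ fib C l1, ∀ c ∈ fib C c1, ∀ c' ∈ fib C c1,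
        X.Adj x c → X.Adj x' c → X.Adj x' c' → X.Adj x c' :=
      fun x hx x' hx' c hc c' hc' => nested C X hcomp α hdist hconn hbip hch hx hx' hc hc'
    -- two of the `l`'s with a common neighbour
    have h12 : ∀ c ∈ fib C c1, X.Adj l1 c → X.Adj l2 c → False := by
      intro c hc h1 h2
      have dc := dist_inv C X hcomp α hdist hconn hc
      have m1 : ¬ X.Adj l1 c3 := fun h => hall c hc h1 h2 (hnest _ f3 _ f1 _ k3 _ hc hc3 h h1)
      have m2 : ¬ X.Adj l2 c3 := fun h => hall c hc h1 h2 (hnest _ f3 _ f2 _ k3 _ hc hc3 h h2)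
      exact case_two X α hconn hbip hT2 (d := d) (c := c) (c3 := c3) (by omega) (by omega)
        (by rintro rfl; exact m1 h1) hl (by omega) (by omega) (by omega) h1.symm h2.symm a1 a2
        n12 n21 m1 m2
    have h13 : ∀ c ∈ fib C c1, X.Adj l1 c → X.Adj l3 c → False := by
      intro c hc h1 h3
      have dc := dist_inv C X hcomp α hdist hconn hc
      have m1 : ¬ X.Adj l1 c2 := fun h => hall c hc h1 (hnest _ f2 _ f1 _ k2 _ hc hc2 h h1) h3
      have m2 : ¬ X.Adj l3 c2 := fun h => hall c hc h1 (hnest _ f2 _ f3 _ k2 _ hc hc2 h h3) h3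
      exact case_two X α hconn hbip hT2 (d := d) (c := c) (c3 := c2) (by omega) (by omega)
        (by rintro rfl; exact m1 h1) hl (by omega) (by omega) (by omega) h1.symm h3.symm a1 a3
        n13 n31 m1 m2
    have h23 : ∀ c ∈ fib C c1, X.Adj l2 c → X.Adj l3 c → False := by
      intro c hc h2 h3
      have dc := dist_inv C X hcomp α hdist hconn hc
      have m1 : ¬ X.Adj l2 c1 := fun h => hall c hc (hnest _ f1 _ f2 _ k1 _ hc hc1 h h2) h2 h3
      have m2 : ¬ X.Adj l3 c1 := fun h => hall c hc (hnest _ f1 _ f3 _ k1 _ hc hc1 h h3) h2 h3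
      exact case_two X α hconn hbip hT2 (d := d) (c := c) (c3 := c1) (by omega) (by omega)
        (by rintro rfl; exact m1 h2) (by omega) (by omega) (by omega) (by omega) h2.symm h3.symm
        a2 a3 n23 n32 m1 m2
    exact ih c1 c2 c3 l1 l2 l3 dc1 hl k2 k3 f2 f3 hc1.symm hc2.symm hc3.symm
      (fun h => h12 c1 k1 hc1 h.symm) (fun h => h13 c1 k1 hc1 h.symm)
      (fun h => h12 c2 k2 h.symm hc2) (fun h => h23 c2 k2 hc2 h.symm)
      (fun h => h13 c3 k3 h.symm hc3) (fun h => h23 c3 k3 h.symm hc3)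

lemma fiber_eq {Δ : Set Ω} (h : C.IsFiber Δ) : ∃ a, Δ = fib C a := by
  obtain ⟨⟨a, b⟩, hab, ha⟩ := C.nonempty_mem _ h
  refine ⟨a, ?_⟩
  have key : ∀ x, x ∈ Δ ↔ col C (x, x) = {p : Ω × Ω | p.1 = p.2 ∧ p.1 ∈ Δ} := by
    intro x
    rw [← col_eq C h]
    simp
  ext x
  rw [key, ← (key a).1 ha]
  rfl

end config

end CC12

theorem stmt_12 {Ω : Type*} [Fintype Ω] (X : SimpleGraph Ω) (P Q : Set Ω)
    (hconn : X.Connected) (hbip : IsBipartition X P Q) (hchordal : NoLongInducedCycle X)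
    (hT2 : T2Free X)
    (α : Ω) (C : CoherentConfiguration Ω)
    (hcomp : C.Compatible X) (hdist : C.Distinguished α)
    (Δ Γ : Set Ω) (hΔ : C.IsFiber Δ) (hΓ : C.IsFiber Γ) (hne : Δ ≠ Γ) :
    numClasses X Δ Γ ≤ 2 := by
  classical
  obtain ⟨a, rfl⟩ := CC12.fiber_eq C hΔ
  obtain ⟨b, rfl⟩ := CC12.fiber_eq C hΓ
  by_contra hcon
  unfold numClasses at hcon
  obtain ⟨_, ⟨x, hx, rfl⟩, _, ⟨y, hy, rfl⟩, _, ⟨z, hz, rfl⟩, hxy, hxz, hyz⟩ :=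
    (Set.two_lt_ncard (Set.toFinite _)).1 (not_le.1 hcon)
  have hsame : ∀ x ∈ CC12.fib C a, ∀ y ∈ CC12.fib C a, ∀ w ∈ CC12.fib C b, X.Adj x w →
      X.Adj y w → X.neighborSet x ∩ CC12.fib C b = X.neighborSet y ∩ CC12.fib C b := by
    intro x hx y hy w hw h1 h2
    ext v
    constructor
    · rintro ⟨h3, h4⟩
      exact ⟨CC12.nested C X hcomp α hdist hconn hbip hchordal hy hx hw h4 h2 h1 h3, h4⟩
    · rintro ⟨h3, h4⟩
      exact ⟨CC12.nested C X hcomp α hdist hconn hbip hchordal hx hy hw h4 h1 h2 h3, h4⟩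
  have hnonempty : ∀ x ∈ CC12.fib C a, ∀ y ∈ CC12.fib C a,
      X.neighborSet x ∩ CC12.fib C b ≠ X.neighborSet y ∩ CC12.fib C b →
      ∃ w ∈ CC12.fib C b, X.Adj x w := by
    intro x hx y hy hne
    by_contra hno
    push Not at hno
    have h0 : X.neighborSet x ∩ CC12.fib C b = ∅ := by
      ext v
      simp only [Set.mem_inter_iff, Set.mem_empty_iff_false, iff_false]
      exact fun h => hno v h.2 h.1
    have hd := CC12.deg C X hcomp (Eq.trans hx hy.symm) b
    rw [h0, Set.ncard_empty] at hd
    have := (Set.ncard_eq_zero (Set.toFinite _)).1 hd.symm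
    exact hne (h0.trans this.symm)
  obtain ⟨u, hu, hxu⟩ := hnonempty x hx y hy hxy
  obtain ⟨v, hv, hyv⟩ := hnonempty y hy x hx hxy.symm
  obtain ⟨w, hw, hzw⟩ := hnonempty z hz x hx hxz.symm
  have n1 : ¬ X.Adj x v := fun h => hxy (hsame x hx y hy v hv h hyv)
  have n2 : ¬ X.Adj x w := fun h => hxz (hsame x hx z hz w hw h hzw)
  have n3 : ¬ X.Adj y u := fun h => hxy (hsame x hx y hy u hu hxu h)
  have n4 : ¬ X.Adj y w := fun h => hyz (hsame y hy z hz w hw h hzw)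
  have n5 : ¬ X.Adj z u := fun h => hxz (hsame x hx z hz u hu hxu h)
  have n6 : ¬ X.Adj z v := fun h => hyz (hsame y hy z hz v hv hyv h)
  have fy : y ∈ CC12.fib C x := Eq.trans hy hx.symm
  have fz : z ∈ CC12.fib C x := Eq.trans hz hx.symm
  have fv : v ∈ CC12.fib C u := Eq.trans hv hu.symm
  have fw : w ∈ CC12.fib C u := Eq.trans hw hu.symm
  rcases CC12.level X α hconn hbip hxu with h | h
  · exact CC12.main C X hcomp α hdist hconn hbip hchordal hT2 _ u v w x y z rfl h fv fw fy fz
      hxu.symm hyv.symm hzw.symm (fun h => n3 h.symm) (fun h => n5 h.symm) (fun h => n1 h.symm)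
      (fun h => n6 h.symm) (fun h => n2 h.symm) (fun h => n4 h.symm)
  · exact CC12.main C X hcomp α hdist hconn hbip hchordal hT2 _ x y z u v w rfl h fy fz fv fw
      hxu hyv hzw n1 n2 n3 n4 n5 n6
end

section
/- Let X be a connected chordal bipartite T_2-free graph, let α be a vertex of X, and let (Ω,S) be a coherent configuration on the vertex set Ω of X compatible with X in which α is distinguished. Then for every fiber Δ of (Ω,S), the equivalence relation on Δ under which two vertices are equivalent if and only if they have the same neighborhood in X has at most 2 classes; in particular, Δ meets at most 2 classes of the twin relation of X (vertices β, β' are X-twins if every vertex other than β and β' is adjacent to both of them or to neither). -/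
open SimpleGraph

/-- Vertices `u`, `v` are `X`-twins: every vertex other than `u` and `v` is adjacent
to both of them or to neither. -/
def IsTwin {V : Type*} (X : SimpleGraph V) (u v : V) : Prop :=
  ∀ w, w ≠ u → w ≠ v → (X.Adj u w ↔ X.Adj v w)


theorem aux_cycle {V : Type*} {X : SimpleGraph V} (hX : NoLongInducedCycle X) (n : ℕ) (hn : 6 ≤ n)
    (u : ℕ → V) (hinj : ∀ i j, i < j → j < n → u i ≠ u j)
    (hadj : ∀ i j, i < j → j < n → (X.Adj (u i) (u j) ↔ (j = i + 1 ∨ (i = 0 ∧ j = n - 1)))) :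
    False := by
  have key : ∀ i j : Fin n, i.val < j.val → ((cycleGraph n).Adj i j ↔
      (j.val = i.val + 1 ∨ (i.val = 0 ∧ j.val = n - 1))) := by
    intro i j hij
    have hj := j.isLt
    rw [cycleGraph_adj', Fin.sub_val_of_le (a := j) (b := i) (by exact hij.le),
      Fin.val_sub]
    have : n - j.val + i.val < n := by omega
    rw [Nat.mod_eq_of_lt this]
    omega
  refine (hX n hn).false ⟨⟨fun i => u i.val, ?_⟩, ?_⟩
  · intro i j hij
    rcases lt_trichotomy i.val j.val with h | h | h
    · exact absurd hij (hinj _ _ h j.isLt)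
    · exact Fin.ext h
    · exact absurd hij.symm (hinj _ _ h i.isLt)
  · intro i j
    change X.Adj (u i.val) (u j.val) ↔ _
    rcases lt_trichotomy i.val j.val with h | h | h
    · rw [hadj _ _ h j.isLt, key _ _ h]
    · have : i = j := Fin.ext h
      subst this
      simp
    · rw [X.adj_comm, hadj _ _ h i.isLt, SimpleGraph.adj_comm, key _ _ h]

/-- The abstract data extracted from the coherent configuration: colours and heights. -/
structure Cfg {Ω K : Type*} (X : SimpleGraph Ω) (c : Ω → Ω → K) (h : Ω → ℕ) (α : Ω) : Prop where
  req : ∀ {a b a' b'}, c a b = c a' b' → a = b → a' = b'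
  symm : ∀ {a b a' b'}, c a b = c a' b' → c b a = c b' a'
  adj : ∀ {a b a' b'}, c a b = c a' b' → X.Adj a b → X.Adj a' b'
  ext : ∀ {a b a' b'}, c a b = c a' b' → ∀ g, ∃ g', c a g = c a' g' ∧ c g b = c g' b'
  deg : ∀ {a a'}, c a a = c a' a' → ∀ φ : K → Prop,
    {g | φ (c a g)}.ncard = {g | φ (c a' g)}.ncard
  hadj : ∀ {a b}, X.Adj a b → h a = h b + 1 ∨ h b = h a + 1
  hzero : ∀ {a}, h a = 0 → a = α
  hpar : ∀ {a} n, h a = n + 1 → ∃ b, X.Adj a b ∧ h b = n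
  hfib : ∀ {a b}, c a a = c b b → h a = h b

namespace Cfg
variable {Ω K : Type*} {X : SimpleGraph Ω} {c : Ω → Ω → K} {h : Ω → ℕ} {α : Ω}

theorem fib (C : Cfg X c h α) {a b a' b' : Ω} (e : c a b = c a' b') : c a a = c a' a' := by
  obtain ⟨g, h1, -⟩ := C.ext e a
  have := C.req h1 rfl
  rw [h1, ← this]

theorem fib2 (C : Cfg X c h α) {a b a' b' : Ω} (e : c a b = c a' b') : c b b = c b' b' :=
  C.fib (C.symm e)

theorem exch [Finite Ω] (C : Cfg X c h α) {x y u : Ω} (e : c x x = c y y) (h1 : X.Adj y u)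
    (h2 : ¬ X.Adj x u) : ∃ w, c w w = c u u ∧ X.Adj x w ∧ ¬ X.Adj y w := by
  by_contra hcon
  push Not at hcon
  let φ : K → Prop := fun κ => ∃ a g, c a g = κ ∧ X.Adj a g ∧ c g g = c u u
  have hφ : ∀ a g, φ (c a g) ↔ (X.Adj a g ∧ c g g = c u u) := by
    intro a g
    constructor
    · rintro ⟨a', g', e1, e2, e3⟩
      exact ⟨C.adj e1 e2, by rw [← C.fib2 e1, e3]⟩
    · rintro ⟨e2, e3⟩
      exact ⟨a, g, rfl, e2, e3⟩
  have hs : {g | φ (c x g)} ⊆ {g | φ (c y g)} := by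
    intro g hg
    have := (hφ _ _).1 hg
    exact (hφ _ _).2 ⟨hcon g this.2 this.1, this.2⟩
  have heq := Set.eq_of_subset_of_ncard_le hs (C.deg e φ).ge (Set.toFinite _)
  have : u ∈ {g | φ (c y g)} := (hφ _ _).2 ⟨h1, rfl⟩
  rw [← heq] at this
  exact h2 ((hφ _ _).1 this).1

theorem path [Finite Ω] (C : Cfg X c h α) (hX : NoLongInducedCycle X) {a b a' b' : Ω}
    (ea : c a a = c a' a') (eb : c b b = c b' b') (h1 : X.Adj a b) (h2 : X.Adj b a')
    (h3 : X.Adj a' b') (h4 : ¬ X.Adj a b') (k : ℕ) : ∃ v : ℕ → Ω,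
      (∀ i, i < k + 4 → c (v i) (v i) = if i % 2 = 0 then c a a else c b b) ∧
      (∀ i j, i < j → j < k + 4 → v i ≠ v j) ∧
      (∀ i j, i < j → j < k + 4 → (X.Adj (v i) (v j) ↔ j = i + 1)) := by
  have hab := C.hadj h1
  induction k with
  | zero =>
    have ha := C.hfib ea
    have hb := C.hfib eb
    have n1 : ¬ X.Adj a a' := fun hh => by have := C.hadj hh; omega
    have n2 : ¬ X.Adj b b' := fun hh => by have := C.hadj hh; omega
    have na : a ≠ a' := by rintro rfl; exact h4 h3
    have nb : b ≠ b' := by rintro rfl; exact h4 h1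
    have nab : a ≠ b := h1.ne
    have nab' : a ≠ b' := by rintro rfl; omega
    refine ⟨fun i => if i = 0 then a else if i = 1 then b else if i = 2 then a' else b', ?_, ?_, ?_⟩
    · intro i hi
      interval_cases i <;> simp [ea, eb]
    · intro i j hij hj
      interval_cases j <;> interval_cases i <;> simp [na, nb, nab, nab', h2.ne, h3.ne]
    · intro i j hij hj
      interval_cases j <;> interval_cases i <;> simp [h1, h2, h3, h4, n1, n2]
  | succ k ih =>
    obtain ⟨v, hc, hne, had⟩ := ih
    have e : c (v (k+3)) (v (k+3)) = c (v (k+1)) (v (k+1)) := by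
      rw [hc _ (by omega), hc _ (by omega)]
      have : (k+3) % 2 = (k+1) % 2 := by omega
      rw [this]
    obtain ⟨w, hw1, hw2, hw3⟩ := C.exch (u := v k) e
      (((had k (k+1) (by omega) (by omega)).2 rfl).symm)
      (fun hh => by have := (had k (k+3) (by omega) (by omega)).1 hh.symm; omega)
    have hwc : c w w = if (k+4) % 2 = 0 then c a a else c b b := by
      rw [hw1, hc _ (by omega)]
      have : (k+4) % 2 = k % 2 := by omega
      rw [this]
    -- parity facts
    have par : ∀ j, j < k + 4 → X.Adj (v j) w → j % 2 = (k + 3) % 2 := by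
      intro j hj hh
      by_contra hcon
      have hj2 : j % 2 = (k+4) % 2 := by omega
      have : c (v j) (v j) = c w w := by rw [hwc, hc _ hj, hj2]
      have := C.hfib this
      have := C.hadj hh
      omega
    have nadj : ∀ m j, j + m = k + 2 → ¬ X.Adj (v j) w := by
      intro m
      induction m using Nat.strong_induction_on with
      | _ m ihm =>
        intro j hj hh
        have hp := par j (by omega) hh
        have hj1 : j ≠ k + 1 := by
          rintro rfl
          exact hw3 hh
        refine aux_cycle hX (k + 5 - j) (by omega)
          (fun i => if j + i = k + 4 then w else v (j + i)) ?_ ?_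
        · intro i l hil hl
          have q1 : j + i ≠ k + 4 := by omega
          by_cases q2 : j + l = k + 4
          · simp only [q1, q2, if_true, if_false]
            intro hv
            by_cases q3 : j + i = k + 3
            · rw [← q3, hv] at hw2
              exact X.loopless.irrefl _ hw2
            · have := (had (j+i) (k+3) (by omega) (by omega)).1 (hv ▸ hw2.symm)
              have q4 : j + i = k + 2 := by omega
              apply hw3
              rw [← hv, q4]
              exact (had (k+1) (k+2) (by omega) (by omega)).2 rfl
          · simp only [q1, q2, if_false]
            exact hne _ _ (by omega) (by omega)
        · intro i l hil hl
          have q1 : j + i ≠ k + 4 := by omega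
          by_cases q2 : j + l = k + 4
          · simp only [q1, q2, if_true, if_false]
            by_cases q3 : i = 0
            · subst q3
              have hl' : l = k + 5 - j - 1 := by omega
              exact ⟨fun _ => Or.inr ⟨rfl, hl'⟩, fun _ => hh⟩
            · by_cases q4 : j + i = k + 3
              · rw [q4]
                exact ⟨fun _ => by omega, fun _ => hw2⟩
              · have := ihm (m - i) (by omega) (j + i) (by omega)
                exact ⟨fun t => absurd t this, fun _ => by omega⟩
          · simp only [q1, q2, if_false]
            rw [had _ _ (by omega) (by omega)]
            omega
    have hwne : ∀ i, i < k + 4 → v i ≠ w := by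
      intro i hi hv
      by_cases q3 : i = k + 3
      · rw [← q3, hv] at hw2
        exact X.loopless.irrefl _ hw2
      · have := (had i (k+3) (by omega) (by omega)).1 (hv ▸ hw2.symm)
        have q4 : i = k + 2 := by omega
        apply hw3
        rw [← hv, q4]
        exact (had (k+1) (k+2) (by omega) (by omega)).2 rfl
    refine ⟨fun i => if i = k + 4 then w else v i, ?_, ?_, ?_⟩
    · intro i hi
      by_cases q : i = k + 4
      · subst q
        simpa using hwc
      · simp only [q, if_false]
        exact hc i (by omega)
    · intro i j hij hj
      have q1 : i ≠ k + 4 := by omega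
      by_cases q2 : j = k + 4
      · simp only [q1, q2, if_true, if_false]
        exact hwne i (by omega)
      · simp only [q1, q2, if_false]
        exact hne _ _ hij (by omega)
    · intro i j hij hj
      have q1 : i ≠ k + 4 := by omega
      by_cases q2 : j = k + 4
      · simp only [q1, q2, if_true, if_false]
        by_cases q3 : i = k + 3
        · subst q3
          exact ⟨fun _ => rfl, fun _ => hw2⟩
        · have := nadj (k + 2 - i) i (by omega)
          exact ⟨fun t => absurd t this, fun _ => by omega⟩
      · simp only [q1, q2, if_false]
        exact had _ _ hij (by omega)

theorem sq [Finite Ω] (C : Cfg X c h α) (hX : NoLongInducedCycle X) {a b a' b' : Ω}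
    (ea : c a a = c a' a') (eb : c b b = c b' b') (h1 : X.Adj a b) (h2 : X.Adj b a')
    (h3 : X.Adj a' b') : X.Adj a b' := by
  by_contra h4
  obtain ⟨v, -, hne, -⟩ := C.path hX ea eb h1 h2 h3 h4 (Nat.card Ω)
  have hinj : Function.Injective (fun i : Fin (Nat.card Ω + 4) => v i.val) := by
    intro i j hij
    rcases lt_trichotomy i.val j.val with h | h | h
    · exact absurd hij (hne _ _ h j.isLt)
    · exact Fin.ext h
    · exact absurd hij.symm (hne _ _ h i.isLt)
  have := Nat.card_le_card_of_injective _ hinj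
  simp at this

end Cfg

theorem aux_claw {V : Type*} {X : SimpleGraph V} (hX : T2Free X) (h : V → ℕ)
    (hadj : ∀ {a b}, X.Adj a b → h a = h b + 1 ∨ h b = h a + 1)
    {z x y w x' y' w' : V} (zx : X.Adj z x) (zy : X.Adj z y) (zw : X.Adj z w)
    (xx : X.Adj x x') (yy : X.Adj y y') (ww : X.Adj w w')
    (xy : ¬ X.Adj x y') (xw : ¬ X.Adj x w') (yx : ¬ X.Adj y x') (yw : ¬ X.Adj y w')
    (wx : ¬ X.Adj w x') (wy : ¬ X.Adj w y') (nx : z ≠ x') (ny : z ≠ y') (nw : z ≠ w') : False := by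
  have par : ∀ {a b}, X.Adj a b → h a % 2 ≠ h b % 2 := by
    intro a b hab
    have := hadj hab
    omega
  have p1 := par zx
  have p2 := par zy
  have p3 := par zw
  have p4 := par xx
  have p5 := par yy
  have p6 := par ww
  have npar : ∀ {a b}, h a % 2 = h b % 2 → ¬ X.Adj a b := fun e hh => par hh e
  have neq : ∀ {a b}, h a % 2 ≠ h b % 2 → a ≠ b := by
    rintro a b e rfl
    exact e rfl
  have exy : x ≠ y := by rintro rfl; exact xy yy
  have exw : x ≠ w := by rintro rfl; exact xw ww
  have eyw : y ≠ w := by rintro rfl; exact yw ww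
  have exy' : x' ≠ y' := by rintro rfl; exact xy xx
  have exw' : x' ≠ w' := by rintro rfl; exact xw xx
  have eyw' : y' ≠ w' := by rintro rfl; exact yw yy
  have q1 : ¬ X.Adj z x' := npar (by omega)
  have q2 : ¬ X.Adj z y' := npar (by omega)
  have q3 : ¬ X.Adj z w' := npar (by omega)
  have q4 : ¬ X.Adj x y := npar (by omega)
  have q5 : ¬ X.Adj x w := npar (by omega)
  have q6 : ¬ X.Adj y w := npar (by omega)
  have q7 : ¬ X.Adj x' y' := npar (by omega)
  have q8 : ¬ X.Adj x' w' := npar (by omega)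
  have q9 : ¬ X.Adj y' w' := npar (by omega)
  have r1 : x ≠ y' := neq (by omega)
  have r2 : x ≠ w' := neq (by omega)
  have r3 : y ≠ x' := neq (by omega)
  have r4 : y ≠ w' := neq (by omega)
  have r5 : w ≠ x' := neq (by omega)
  have r6 : w ≠ y' := neq (by omega)
  let u : Fin 7 → V := ![z, x, y, w, x', y', w']
  have H : ∀ i j : Fin 7, i < j → u i ≠ u j ∧ (X.Adj (u i) (u j) ↔ bipartiteClaw.Adj i j) := by
    intro i j hij
    fin_cases i <;> fin_cases j <;> first
      | exact absurd hij (by decide)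
      | (simp [u, bipartiteClaw, *, zx.ne, zy.ne, zw.ne, xx.ne, yy.ne, ww.ne])
  refine hX.false ⟨⟨u, ?_⟩, ?_⟩
  · intro i j hij
    rcases lt_trichotomy i j with h | h | h
    · exact absurd hij (H _ _ h).1
    · exact h
    · exact absurd hij.symm (H _ _ h).1
  · intro i j
    change X.Adj (u i) (u j) ↔ _
    rcases lt_trichotomy i j with h | h | h
    · exact (H _ _ h).2
    · subst h
      simp
    · rw [X.adj_comm, (H _ _ h).2, SimpleGraph.adj_comm]

theorem aux_oct {V : Type*} {X : SimpleGraph V} (hX : NoLongInducedCycle X) (h : V → ℕ)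
    (hadj : ∀ {a b}, X.Adj a b → h a = h b + 1 ∨ h b = h a + 1)
    {a0 a1 a2 a3 a4 a5 a6 a7 : V}
    (e0 : X.Adj a0 a1) (e1 : X.Adj a1 a2) (e2 : X.Adj a2 a3) (e3 : X.Adj a3 a4)
    (e4 : X.Adj a4 a5) (e5 : X.Adj a5 a6) (e6 : X.Adj a6 a7) (e7 : X.Adj a0 a7)
    (f0 : ¬ X.Adj a0 a3) (f1 : ¬ X.Adj a0 a5) (f2 : ¬ X.Adj a2 a5) (f3 : ¬ X.Adj a2 a7)
    (f4 : ¬ X.Adj a1 a4) (f5 : ¬ X.Adj a4 a7) (f6 : ¬ X.Adj a1 a6) (f7 : ¬ X.Adj a3 a6) :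
    False := by
  have par : ∀ {a b}, X.Adj a b → h a % 2 ≠ h b % 2 := by
    intro a b hab
    have := hadj hab
    omega
  have p0 := par e0
  have p1 := par e1
  have p2 := par e2
  have p3 := par e3
  have p4 := par e4
  have p5 := par e5
  have p6 := par e6
  have npar : ∀ {a b}, h a % 2 = h b % 2 → ¬ X.Adj a b := fun e hh => par hh e
  have neq : ∀ {a b}, h a % 2 ≠ h b % 2 → a ≠ b := by
    rintro a b e rfl
    exact e rfl
  have g02 : ¬ X.Adj a0 a2 := npar (by omega)
  have g04 : ¬ X.Adj a0 a4 := npar (by omega)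
  have g06 : ¬ X.Adj a0 a6 := npar (by omega)
  have g24 : ¬ X.Adj a2 a4 := npar (by omega)
  have g26 : ¬ X.Adj a2 a6 := npar (by omega)
  have g46 : ¬ X.Adj a4 a6 := npar (by omega)
  have g13 : ¬ X.Adj a1 a3 := npar (by omega)
  have g15 : ¬ X.Adj a1 a5 := npar (by omega)
  have g17 : ¬ X.Adj a1 a7 := npar (by omega)
  have g35 : ¬ X.Adj a3 a5 := npar (by omega)
  have g37 : ¬ X.Adj a3 a7 := npar (by omega)
  have g57 : ¬ X.Adj a5 a7 := npar (by omega)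
  have d02 : a0 ≠ a2 := by rintro rfl; exact f0 e2
  have d04 : a0 ≠ a4 := by rintro rfl; exact f1 e4
  have d06 : a0 ≠ a6 := by rintro rfl; exact f1 e5.symm
  have d24 : a2 ≠ a4 := by rintro rfl; exact f2 e4
  have d26 : a2 ≠ a6 := by rintro rfl; exact f3 e6
  have d46 : a4 ≠ a6 := by rintro rfl; exact f5 e6
  have d13 : a1 ≠ a3 := by rintro rfl; exact f0 e0
  have d15 : a1 ≠ a5 := by rintro rfl; exact f1 e0
  have d17 : a1 ≠ a7 := by rintro rfl; exact f6 e6.symm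
  have d35 : a3 ≠ a5 := by rintro rfl; exact f2 e2
  have d37 : a3 ≠ a7 := by rintro rfl; exact f0 e7
  have d57 : a5 ≠ a7 := by rintro rfl; exact f1 e7
  have d03 : a0 ≠ a3 := neq (by omega)
  have d05 : a0 ≠ a5 := neq (by omega)
  have d25 : a2 ≠ a5 := neq (by omega)
  have d27 : a2 ≠ a7 := neq (by omega)
  have d14 : a1 ≠ a4 := neq (by omega)
  have d47 : a4 ≠ a7 := neq (by omega)
  have d16 : a1 ≠ a6 := neq (by omega)
  have d36 : a3 ≠ a6 := neq (by omega)
  let u : ℕ → V := fun i => if i = 0 then a0 else if i = 1 then a1 else if i = 2 then a2 else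
    if i = 3 then a3 else if i = 4 then a4 else if i = 5 then a5 else if i = 6 then a6 else a7
  refine aux_cycle hX 8 (by norm_num) u ?_ ?_
  · intro i j hij hj
    interval_cases j <;> interval_cases i <;>
      simp [u, d02, d04, d06, d24, d26, d46, d13, d15, d17, d35, d37, d57, d03, d05, d25, d27,
        d14, d47, d16, d36, e0.ne, e1.ne, e2.ne, e3.ne, e4.ne, e5.ne, e6.ne, e7.ne]
  · intro i j hij hj
    interval_cases j <;> interval_cases i <;>
      simp [u, e0, e1, e2, e3, e4, e5, e6, e7, f0, f1, f2, f3, f4, f5, f6, f7,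
        g02, g04, g06, g24, g26, g46, g13, g15, g17, g35, g37, g57]

namespace Cfg
variable {Ω K : Type*} {X : SimpleGraph Ω} {c : Ω → Ω → K} {h : Ω → ℕ} {α : Ω}

/-- Common neighbour in the fiber with colour `k`. -/
def Rel (X : SimpleGraph Ω) (c : Ω → Ω → K) (k : K) (x y : Ω) : Prop :=
  ∃ g, c g g = k ∧ X.Adj x g ∧ X.Adj g y

theorem Rel.sym {k : K} {x y : Ω} (H : Rel X c k x y) : Rel X c k y x := by
  obtain ⟨g, h1, h2, h3⟩ := H
  exact ⟨g, h1, h3.symm, h2.symm⟩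

theorem rel_color (C : Cfg X c h α) {k : K} {x y x' y' : Ω} (e : c x y = c x' y')
    (H : Rel X c k x y) : Rel X c k x' y' := by
  obtain ⟨g, h1, h2, h3⟩ := H
  obtain ⟨g', e1, e2⟩ := C.ext e g
  exact ⟨g', by rw [← C.fib2 e1, h1], C.adj e1 h2, C.adj e2 h3⟩

/-- uniformity -/
theorem unif (C : Cfg X c h α) {k l : K} {x y x' : Ω} (e : c x x = c x' x')
    (H : Rel X c k x y) (H' : ¬ Rel X c l x y) :
    ∃ y', c y' y' = c y y ∧ Rel X c k x' y' ∧ ¬ Rel X c l x' y' := by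
  obtain ⟨y', e1, -⟩ := C.ext e y
  exact ⟨y', (C.fib2 e1).symm, C.rel_color e1 H, fun t => H' (C.rel_color e1.symm t)⟩

theorem nbr (C : Cfg X c h α) {x x' g : Ω} (e : c x x = c x' x') (H : X.Adj x g) :
    ∃ g', c g' g' = c g g ∧ X.Adj x' g' := by
  obtain ⟨g', e1, -⟩ := C.ext e g
  exact ⟨g', (C.fib2 e1).symm, C.adj e1 H⟩

theorem Rel.adj [Finite Ω] (C : Cfg X c h α) (hX : NoLongInducedCycle X) {x y g : Ω}
    (e : c x x = c y y) (H : Rel X c (c g g) x y) (hg : X.Adj x g) : X.Adj y g := by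
  obtain ⟨g', h1, h2, h3⟩ := H
  exact C.sq hX e.symm h1 h3.symm h2.symm hg

theorem Rel.tr [Finite Ω] (C : Cfg X c h α) (hX : NoLongInducedCycle X) {x y z : Ω} {k : K}
    (e : c x x = c y y) (H : Rel X c k x y) (H' : Rel X c k y z) : Rel X c k x z := by
  obtain ⟨g, h1, h2, h3⟩ := H'
  subst h1
  exact ⟨g, rfl, (Rel.adj C hX e.symm H.sym h2), h3⟩

theorem main [Finite Ω] (C : Cfg X c h α) (hX : NoLongInducedCycle X) (hT : T2Free X) (n : ℕ) :
    ∀ {d1 d2 d3 b1 b2 b3 : Ω}, h d1 = n → h b1 = n + 1 → c d1 d1 = c d2 d2 → c d1 d1 = c d3 d3 →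
      c b1 b1 = c b2 b2 → c b1 b1 = c b3 b3 → X.Adj d1 b1 → X.Adj d2 b2 → X.Adj d3 b3 →
      ¬ Rel X c (c b1 b1) d1 d2 → ¬ Rel X c (c b1 b1) d1 d3 → ¬ Rel X c (c b1 b1) d2 d3 → False := by
  induction n with
  | zero =>
    intro d1 d2 d3 b1 b2 b3 hd hb e2 e3 f2 f3 a1 a2 a3 r12 r13 r23
    have h1 := C.hzero hd
    have h2 := C.hzero ((C.hfib e2).symm.trans hd)
    subst h1
    subst h2
    exact r12 ⟨b1, rfl, a1, a1.symm⟩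
  | succ n ih =>
    intro d1 d2 d3 b1 b2 b3 hd hb e2 e3 f2 f3 a1 a2 a3 r12 r13 r23
    obtain ⟨z1, dz1, hz1⟩ := C.hpar n hd
    obtain ⟨z2, ez2, dz2⟩ := C.nbr e2 dz1
    obtain ⟨z3, ez3, dz3⟩ := C.nbr e3 dz1
    by_cases case : ∃ y, c y y = c d1 d1 ∧ Rel X c (c z1 z1) d1 y ∧ ¬ Rel X c (c b1 b1) d1 y
    · obtain ⟨y, ey, ⟨z, ez, dz, zy⟩, hy⟩ := case
      obtain ⟨b, eb, yb⟩ := C.nbr ey.symm a1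
      -- a third vertex
      obtain ⟨w, bw, zw, ew, ebw, ezw, wb, wz, rw1, rwy⟩ : ∃ w bw zw, c w w = c d1 d1 ∧
          c bw bw = c b1 b1 ∧ c zw zw = c z1 z1 ∧ X.Adj w bw ∧ X.Adj w zw ∧
          ¬ Rel X c (c b1 b1) d1 w ∧ ¬ Rel X c (c b1 b1) w y := by
        by_cases q : Rel X c (c b1 b1) d2 y
        · refine ⟨d3, b3, z3, e3.symm, f3.symm, ez3, a3, dz3, r13, fun t => r23 ?_⟩
          exact Rel.tr C hX (e2.symm.trans ey.symm) q t.sym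
        · exact ⟨d2, b2, z2, e2.symm, f2.symm, ez2, a2, dz2, r12, q⟩
      have hhz := C.hfib ez
      have hhb := C.hfib eb
      have hhy := C.hfib ey
      have hhbw := C.hfib ebw
      have hhw := C.hfib ew
      have hhzw := C.hfib ezw
      have n1 : ¬ X.Adj d1 b := fun t => hy ⟨b, eb, t, yb.symm⟩
      have n2 : ¬ X.Adj y b1 := fun t => hy ⟨b1, rfl, a1, t.symm⟩
      have n3 : z ≠ b1 := by rintro rfl; omega
      have n4 : z ≠ b := by rintro rfl; omega
      by_cases q : X.Adj z w
      · refine aux_claw hT h C.hadj dz.symm zy q a1 yb wb n1 ?_ n2 ?_ ?_ ?_ n3 n4 ?_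
        · exact fun t => rw1 ⟨bw, ebw, t, wb.symm⟩
        · exact fun t => rwy ⟨bw, ebw, wb, t.symm⟩
        · exact fun t => rw1 ⟨b1, rfl, a1, t.symm⟩
        · exact fun t => rwy ⟨b, eb, t, yb.symm⟩
        · rintro rfl; omega
      · have nd : ¬ X.Adj d1 zw := fun t =>
          q (C.sq hX (ez.trans ezw.symm) ew.symm dz.symm t wz.symm)
        have ny : ¬ X.Adj y zw := fun t =>
          q (C.sq hX (ez.trans ezw.symm) (ey.trans ew.symm) zy t wz.symm)
        obtain _ | n := n
        · exfalso
          have hz0 := C.hzero (hhz.trans hz1)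
          have hz0' := C.hzero (hhzw.trans hz1)
          rw [hz0, ← hz0'] at q
          exact q wz.symm
        obtain ⟨p, zp, hp⟩ := C.hpar n (hhz.trans hz1)
        obtain ⟨p', pp, hp', n5, n6, n7⟩ : ∃ p', X.Adj p p' ∧ h p' ≤ n + 1 ∧ ¬ X.Adj d1 p' ∧
            ¬ X.Adj y p' ∧ z ≠ p' := by
          obtain _ | n := n
          · obtain ⟨p', t1, t2⟩ := C.hpar 0 (hhzw.trans hz1)
            rw [C.hzero t2, ← C.hzero hp] at t1
            refine ⟨zw, t1.symm, by omega, nd, ny, ?_⟩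
            rintro rfl
            exact q wz.symm
          · obtain ⟨p', t1, t2⟩ := C.hpar n hp
            refine ⟨p', t1, by omega, ?_, ?_, ?_⟩
            · intro t
              have := C.hadj t
              omega
            · intro t
              have := C.hadj t
              omega
            · rintro rfl
              omega
        refine aux_claw hT h C.hadj dz.symm zy zp a1 yb pp n1 n5 n2 n6 ?_ ?_ n3 n4 n7
        · intro t
          have := C.hadj t
          omega
        · intro t
          have := C.hadj t
          omega
    · have key : ∀ x y, c x x = c d1 d1 → c y y = c d1 d1 → Rel X c (c z1 z1) x y →
          Rel X c (c b1 b1) x y := by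
        intro x y ex ey H
        by_contra hcon
        obtain ⟨y', t1, t2, t3⟩ := C.unif ex H hcon
        exact case ⟨y', t1.trans ey, t2, t3⟩
      have s12 : ¬ Rel X c (c z1 z1) d1 d2 := fun t => r12 (key _ _ rfl e2.symm t)
      have s13 : ¬ Rel X c (c z1 z1) d1 d3 := fun t => r13 (key _ _ rfl e3.symm t)
      have s23 : ¬ Rel X c (c z1 z1) d2 d3 := fun t => r23 (key _ _ e2.symm e3.symm t)
      refine ih hz1 hd ez2.symm ez3.symm e2 e3 dz1.symm dz2.symm dz3.symm ?_ ?_ ?_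
      · rintro ⟨g, g1, g2, g3⟩
        exact s12 ⟨z2, ez2, C.sq hX (g1.symm) ez2.symm dz1 g2 g3 |> fun t => t, dz2.symm⟩
      · rintro ⟨g, g1, g2, g3⟩
        exact s13 ⟨z3, ez3, C.sq hX (g1.symm) ez3.symm dz1 g2 g3, dz3.symm⟩
      · rintro ⟨g, g1, g2, g3⟩
        exact s23 ⟨z3, ez3, C.sq hX (e2.symm.trans g1.symm) (ez2.trans ez3.symm) dz2 g2 g3, dz3.symm⟩

/-- at most two classes, for any direction -/
theorem two [Finite Ω] (C : Cfg X c h α) (hX : NoLongInducedCycle X) (hT : T2Free X)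
    {d1 d2 d3 b : Ω} (e2 : c d1 d1 = c d2 d2) (e3 : c d1 d1 = c d3 d3)
    (a1 : X.Adj d1 b) (r12 : ¬ Rel X c (c b b) d1 d2) (r13 : ¬ Rel X c (c b b) d1 d3) :
    Rel X c (c b b) d2 d3 := by
  by_contra r23
  obtain ⟨b2, f2, a2⟩ := C.nbr e2 a1
  obtain ⟨b3, f3, a3⟩ := C.nbr e3 a1
  rcases C.hadj a1 with hh | hh
  · refine C.main hX hT (h b) rfl hh f2.symm f3.symm e2 e3 a1.symm a2.symm a3.symm ?_ ?_ ?_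
    · rintro ⟨g, g1, g2, g3⟩
      exact r12 ⟨b2, f2, C.sq hX g1.symm f2.symm a1 g2 g3, a2.symm⟩
    · rintro ⟨g, g1, g2, g3⟩
      exact r13 ⟨b3, f3, C.sq hX g1.symm f3.symm a1 g2 g3, a3.symm⟩
    · rintro ⟨g, g1, g2, g3⟩
      exact r23 ⟨b3, f3, C.sq hX (e2.symm.trans g1.symm) (f2.trans f3.symm) a2 g2 g3, a3.symm⟩
  · exact C.main hX hT (h d1) rfl hh e2 e3 f2.symm f3.symm a1 a2 a3 r12 r13 r23

theorem oct [Finite Ω] (C : Cfg X c h α) (hX : NoLongInducedCycle X)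
    {k l : K} {x1 y1 x2 y2 : Ω} (e1 : c x1 x1 = c y1 y1) (e2 : c x1 x1 = c x2 x2)
    (e3 : c x1 x1 = c y2 y2) (k1 : Rel X c k x1 y1) (k2 : Rel X c k y2 x2)
    (l1 : Rel X c l y1 y2) (l2 : Rel X c l x2 x1) (nk : ¬ Rel X c k x1 x2)
    (nl : ¬ Rel X c l x1 y1) : False := by
  obtain ⟨g1, s1, s2, s3⟩ := k1
  obtain ⟨g3, t1, t2, t3⟩ := l1
  obtain ⟨g5, u1, u2, u3⟩ := k2
  obtain ⟨g7, v1, v2, v3⟩ := l2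
  have m1 : ¬ X.Adj g1 x2 := fun t => nk ⟨g1, s1, s2, t⟩
  have m2 : ¬ X.Adj x1 g5 := fun t => nk ⟨g5, u1, t, u3⟩
  have m3 : ¬ X.Adj g1 y2 := fun t =>
    nk ⟨g5, u1, C.sq hX e3 (s1.trans u1.symm) s2 t u2, u3⟩
  have m4 : ¬ X.Adj y1 g5 := fun t =>
    nk ⟨g5, u1, C.sq hX e1 (s1.trans u1.symm) s2 s3 t, u3⟩
  have m5 : ¬ X.Adj x1 g3 := fun t => nl ⟨g3, t1, t, t2.symm⟩
  have m6 : ¬ X.Adj y1 g7 := fun t => nl ⟨g7, v1, v3.symm, t.symm⟩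
  have m7 : ¬ X.Adj y2 g7 := fun t =>
    m6 (C.sq hX (e1.symm.trans e3) (t1.trans v1.symm) t2 t3 t)
  have m8 : ¬ X.Adj g3 x2 := fun t =>
    m5 (C.sq hX e2 (v1.trans t1.symm) v3.symm v2.symm t.symm)
  exact aux_oct hX h C.hadj s2 s3 t2 t3 u2 u3 v2 v3.symm m5 m2 m4 m6 m3 m7 m1 m8

theorem three_aux [Finite Ω] (C : Cfg X c h α) (hX : NoLongInducedCycle X) (hT : T2Free X)
    {d1 d2 d3 b b' : Ω} (e2 : c d1 d1 = c d2 d2) (e3 : c d1 d1 = c d3 d3)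
    (a : X.Adj d1 b) (a' : X.Adj d1 b') (r12 : ¬ Rel X c (c b b) d1 d2)
    (r13 : Rel X c (c b b) d1 d3) (r13' : ¬ Rel X c (c b' b') d1 d3) : False := by
  obtain ⟨y, ey, k2, l2⟩ := C.unif e2 r13 r13'
  have e4 := e3.trans ey.symm
  have twoD : ∀ {u v w : Ω}, c d1 d1 = c u u → c d1 d1 = c v v → c d1 d1 = c w w →
      ¬ Rel X c (c b' b') u v → ¬ Rel X c (c b' b') u w → Rel X c (c b' b') v w := by
    intro u v w eu ev ew q1 q2
    obtain ⟨g, hg, ag⟩ := C.nbr eu a'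
    rw [← hg] at q1 q2 ⊢
    exact C.two hX hT (eu.symm.trans ev) (eu.symm.trans ew) ag q1 q2
  by_cases q : Rel X c (c b' b') d2 d1
  · have q2 : ¬ Rel X c (c b' b') d1 y := fun t => l2 (Rel.tr C hX e2.symm q t)
    exact C.oct hX e3 e2 e4 r13 k2.sym (twoD rfl e3 e4 r13' q2) q r12 r13'
  · have q1 := twoD e2 rfl e4 q l2
    have q2 : Rel X c (c b' b') d2 d3 := by
      by_contra hcon
      exact r13' (twoD e2 rfl e3 q hcon)
    refine C.oct hX e3.symm (e3.symm.trans e2) (e3.symm.trans e4) r13.sym k2.sym q1 q2 ?_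
      (fun t => r13' t.sym)
    exact fun t => r12 (Rel.tr C hX e3 r13 t)

theorem sep [Finite Ω] (C : Cfg X c h α) (hX : NoLongInducedCycle X) {d1 d2 : Ω}
    (e : c d1 d1 = c d2 d2) (hN : X.neighborSet d1 ≠ X.neighborSet d2) :
    ∃ k, ¬ Rel X c k d1 d2 ∧ ∀ d, c d1 d1 = c d d → ∃ b, c b b = k ∧ X.Adj d b := by
  by_contra hcon
  push Not at hcon
  apply hN
  have aux : ∀ g, X.Adj d1 g → X.Adj d2 g := by
    intro g hg
    by_contra hng
    obtain ⟨d, h1, h2⟩ := hcon (c g g) (fun t => hng (Rel.adj C hX e t hg))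
    obtain ⟨b, h3, h4⟩ := C.nbr h1 hg
    exact h2 b h3 h4
  have aux2 : ∀ g, X.Adj d2 g → X.Adj d1 g := by
    intro g hg
    by_contra hng
    obtain ⟨d, h1, h2⟩ := hcon (c g g) (fun t => hng (Rel.adj C hX e.symm t.sym hg))
    obtain ⟨b, h3, h4⟩ := C.nbr (e.symm.trans h1) hg
    exact h2 b h3 h4
  ext g
  exact ⟨aux g, aux2 g⟩

theorem three [Finite Ω] (C : Cfg X c h α) (hX : NoLongInducedCycle X) (hT : T2Free X)
    {d1 d2 d3 : Ω} (e2 : c d1 d1 = c d2 d2) (e3 : c d1 d1 = c d3 d3)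
    (n12 : X.neighborSet d1 ≠ X.neighborSet d2) (n13 : X.neighborSet d1 ≠ X.neighborSet d3)
    (n23 : X.neighborSet d2 ≠ X.neighborSet d3) : False := by
  obtain ⟨k, r12, hk⟩ := C.sep hX e2 n12
  obtain ⟨l, r13, hl⟩ := C.sep hX e3 n13
  obtain ⟨m, r23, hm⟩ := C.sep hX (e2.symm.trans e3) n23
  obtain ⟨b, rfl, hb⟩ := hk d1 rfl
  by_cases q : Rel X c (c b b) d1 d3
  · obtain ⟨b', rfl, hb'⟩ := hl d1 rfl
    exact C.three_aux hX hT e2 e3 hb hb' r12 q r13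
  · have q' := C.two hX hT e2 e3 hb r12 q
    obtain ⟨b', rfl, hb'⟩ := hm d2 rfl
    obtain ⟨b2, hb2, hbb⟩ := C.nbr e2 hb
    rw [← hb2] at q' r12
    exact C.three_aux hX hT e2.symm (e2.symm.trans e3) hbb hb' (fun t => r12 t.sym) q' r23

end Cfg

theorem aux_cfg {Ω : Type*} [Fintype Ω] (X : SimpleGraph Ω) (P Q : Set Ω)
    (hconn : X.Connected) (hbip : IsBipartition X P Q)
    (α : Ω) (C : CoherentConfiguration Ω)
    (hcomp : C.Compatible X) (hdist : C.Distinguished α)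
    (Δ : Set Ω) (hΔ : C.IsFiber Δ) :
    ∃ c : Ω → Ω → Set (Ω × Ω), Cfg X c (X.dist α) α ∧
      ∀ x ∈ Δ, ∀ y ∈ Δ, c x x = c y y := by
  classical
  choose c' hc' huniq using fun p => C.partition p
  have hS : ∀ a b, c' (a, b) ∈ C.S := fun a b => (hc' (a, b)).1
  have hM : ∀ a b, (a, b) ∈ c' (a, b) := fun a b => (hc' (a, b)).2
  have hU : ∀ a b s, s ∈ C.S → (a, b) ∈ s → s = c' (a, b) := fun a b s h1 h2 =>
    huniq (a, b) s ⟨h1, h2⟩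
  have hI : ∀ a b r, r ∈ C.S → ((a, b) ∈ r ↔ c' (a, b) = r) := fun a b r hr =>
    ⟨fun t => (hU a b r hr t).symm, fun t => t ▸ hM a b⟩
  have req : ∀ {a b a' b'}, c' (a, b) = c' (a', b') → a = b → a' = b' := by
    intro a b a' b' e hab
    exact C.diag_union _ (hS a b) ⟨(a, b), hM a b, hab⟩ (a', b') (e ▸ hM a' b')
  have symm : ∀ {a b a' b'}, c' (a, b) = c' (a', b') → c' (b, a) = c' (b', a') := by
    intro a b a' b' e
    have h1 := C.converse_mem _ (hS a b)
    rw [← hU b a _ h1 (hM a b)]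
    exact hU b' a' _ h1 (by rw [e]; exact hM a' b')
  have adj : ∀ {a b a' b'}, c' (a, b) = c' (a', b') → X.Adj a b → X.Adj a' b' := by
    intro a b a' b' e hab
    exact hcomp _ (hS a b) ⟨(a, b), hM a b, hab⟩ (a', b') (e ▸ hM a' b')
  have reg : ∀ {a b a' b'}, c' (a, b) = c' (a', b') → ∀ r ∈ C.S, ∀ s ∈ C.S,
      {g | c' (a, g) = r ∧ c' (g, b) = s}.ncard = {g | c' (a', g) = r ∧ c' (g, b') = s}.ncard := by
    intro a b a' b' e r hr s hs
    have := C.regularity r hr s hs _ (hS a b) (a, b) (hM a b) (a', b') (e ▸ hM a' b')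
    simpa only [hI _ _ r hr, hI _ _ s hs] using this
  have ext : ∀ {a b a' b'}, c' (a, b) = c' (a', b') → ∀ g, ∃ g', c' (a, g) = c' (a', g') ∧
      c' (g, b) = c' (g', b') := by
    intro a b a' b' e g
    have h1 := reg e _ (hS a g) _ (hS g b)
    have h2 : 0 < {g' | c' (a, g') = c' (a, g) ∧ c' (g', b) = c' (g, b)}.ncard :=
      (Set.ncard_pos (Set.toFinite _)).2 ⟨g, rfl, rfl⟩
    rw [h1] at h2
    obtain ⟨g', h3, h4⟩ := (Set.ncard_pos (Set.toFinite _)).1 h2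
    exact ⟨g', h3.symm, h4.symm⟩
  have deg1 : ∀ {a a'}, c' (a, a) = c' (a', a') → ∀ r,
      {g | c' (a, g) = r}.ncard = {g | c' (a', g) = r}.ncard := by
    intro a a' e r
    by_cases hr : ∃ x y, c' (x, y) = r
    · obtain ⟨x, y, rfl⟩ := hr
      have h1 := reg e _ (hS x y) _ (hS y x)
      have h2 : ∀ a, {g | c' (a, g) = c' (x, y) ∧ c' (g, a) = c' (y, x)} =
          {g | c' (a, g) = c' (x, y)} := by
        intro a
        ext g
        exact ⟨fun t => t.1, fun t => ⟨t, symm t⟩⟩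
      rwa [h2, h2] at h1
    · push Not at hr
      simp [hr]
  have deg : ∀ {a a'}, c' (a, a) = c' (a', a') → ∀ φ : Set (Ω × Ω) → Prop,
      {g | φ (c' (a, g))}.ncard = {g | φ (c' (a', g))}.ncard := by
    intro a a' e φ
    have key : ∀ a, {g | φ (c' (a, g))}.ncard =
        ∑ r : Set (Ω × Ω), if φ r then {g | c' (a, g) = r}.ncard else 0 := by
      intro a
      rw [Set.ncard_eq_toFinset_card', Finset.card_eq_sum_card_fiberwise
        (f := fun g => c' (a, g)) (t := Finset.univ) (fun _ _ => Finset.mem_coe.2 (Finset.mem_univ _))]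
      refine Finset.sum_congr rfl fun r _ => ?_
      split_ifs with hr
      · rw [Set.ncard_eq_toFinset_card']
        congr 1
        ext g
        simp only [Finset.mem_filter, Set.mem_toFinset, Set.mem_setOf_eq]
        exact ⟨fun t => t.2, fun t => ⟨t ▸ hr, t⟩⟩
      · rw [Finset.card_eq_zero]
        ext g
        simp only [Finset.mem_filter, Set.mem_toFinset, Set.mem_setOf_eq]
        exact ⟨fun t => absurd (t.2 ▸ t.1) hr, fun t => absurd t (Finset.notMem_empty _)⟩
    rw [key, key]
    refine Finset.sum_congr rfl fun r _ => ?_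
    rw [deg1 e r]
  have hzero : ∀ {a}, X.dist α a = 0 → a = α := fun t =>
    ((hconn.dist_eq_zero_iff).1 t).symm
  have hpar : ∀ {a} n, X.dist α a = n + 1 → ∃ b, X.Adj a b ∧ X.dist α b = n := by
    intro a n hn
    obtain ⟨p, hp⟩ := hconn.exists_walk_length_eq_dist a α
    rw [SimpleGraph.dist_comm, hn] at hp
    cases p with
    | nil => simp at hp
    | @cons _ b _ hab q =>
      refine ⟨b, hab, ?_⟩
      have h1 : q.length = n := by simpa using hp
      have h2 := SimpleGraph.dist_le q
      have h3 := hconn.dist_triangle (u := α) (v := b) (w := a)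
      have h4 : X.dist b a = 1 := SimpleGraph.dist_eq_one_iff_adj.2 hab.symm
      rw [SimpleGraph.dist_comm] at h2
      omega
  have hadj : ∀ {a b}, X.Adj a b → X.dist α a = X.dist α b + 1 ∨ X.dist α b = X.dist α a + 1 := by
    intro a b hab
    have hd := Set.disjoint_left.1 hbip.2.1
    let col : X.Coloring Bool := Coloring.mk (fun v => decide (v ∈ P)) (by
      intro u v huv
      rcases hbip.2.2 u v huv with ⟨h1, h2⟩ | ⟨h1, h2⟩
      · have : v ∉ P := fun t => hd t h2
        simp [h1, this]
      · have : u ∉ P := fun t => hd t h1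
        simp [h2, this])
    obtain ⟨p, hp⟩ := hconn.exists_walk_length_eq_dist α a
    obtain ⟨q, hq⟩ := hconn.exists_walk_length_eq_dist α b
    have e1 := col.even_length_iff_congr p
    have e2 := col.even_length_iff_congr q
    have e3 := col.valid hab
    have h1 : X.dist a b = 1 := SimpleGraph.dist_eq_one_iff_adj.2 hab
    have h2 := hconn.dist_triangle (u := α) (v := a) (w := b)
    have h3 := hconn.dist_triangle (u := α) (v := b) (w := a)
    have h4 : X.dist b a = 1 := SimpleGraph.dist_eq_one_iff_adj.2 hab.symm
    have h5 : X.dist α a ≠ X.dist α b := by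
      intro t
      rw [hp, t, ← hq, e2] at e1
      revert e1 e3
      cases col α <;> cases col a <;> cases col b <;> simp
    omega
  have hα : ∀ x, c' (α, α) = c' (x, x) → x = α := by
    intro x e
    have h1 := hU α α _ hdist rfl
    have h2 := hM x x
    rw [← e, ← h1] at h2
    exact (Prod.ext_iff.1 (Set.mem_singleton_iff.1 h2)).1
  have hle : ∀ n a b, X.dist α a = n → c' (a, a) = c' (b, b) → X.dist α b ≤ n := by
    intro n
    induction n with
    | zero =>
      intro a b h1 h2
      have := hzero h1
      subst this
      rw [hα b h2]
      simp
    | succ n ih =>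
      intro a b h1 h2
      obtain ⟨a', h3, h4⟩ := hpar n h1
      obtain ⟨b', h5, -⟩ := ext h2 a'
      have h6 := adj h5 h3
      obtain ⟨b'', h7, -⟩ := ext (symm h5) a'
      have h8 := req h7 rfl
      subst h8
      have := ih a' b' h4 h7
      have := hadj h6
      omega
  refine ⟨fun a b => c' (a, b), ⟨req, symm, adj, ext, deg, hadj, hzero, hpar, ?_⟩, ?_⟩
  · intro a b e
    exact le_antisymm (hle _ _ _ rfl e.symm) (hle _ _ _ rfl e)
  · intro x hx y hy
    exact (hU x x _ hΔ ⟨rfl, hx⟩).symm.trans (hU y y _ hΔ ⟨rfl, hy⟩)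

theorem aux_twin {V : Type*} {X : SimpleGraph V} {d e : V} (h : X.neighborSet d = X.neighborSet e)
    {g : V} (ht : IsTwin X d g) : IsTwin X e g := by
  have hN : ∀ w, X.Adj d w ↔ X.Adj e w := fun w => Set.ext_iff.1 h w
  intro w h1 h2
  by_cases hw : w = d
  · subst hw
    have n1 : ¬ X.Adj e w := fun t => X.loopless.irrefl _ ((hN w).2 t)
    refine ⟨fun t => absurd t n1, fun t => ?_⟩
    have h3 := ((hN g).1 t.symm)
    have h4 := (ht e (Ne.symm h1) h3.ne).2 h3.symm
    exact absurd h4.symm n1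
  · rw [← hN]
    exact ht w hw h2


theorem stmt_13 {Ω : Type*} [Fintype Ω] (X : SimpleGraph Ω) (P Q : Set Ω)
    (hconn : X.Connected) (hbip : IsBipartition X P Q) (hchordal : NoLongInducedCycle X)
    (hT2 : T2Free X)
    (α : Ω) (C : CoherentConfiguration Ω)
    (hcomp : C.Compatible X) (hdist : C.Distinguished α)
    (Δ : Set Ω) (hΔ : C.IsFiber Δ) :
    ((fun δ => X.neighborSet δ) '' Δ).ncard ≤ 2 ∧
      ((fun δ => {γ : Ω | IsTwin X δ γ}) '' Δ).ncard ≤ 2 := by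
  obtain ⟨c, hC, hfib⟩ := aux_cfg X P Q hconn hbip α C hcomp hdist Δ hΔ
  constructor
  · by_contra hcon
    push Not at hcon
    rw [Set.two_lt_ncard_iff (Set.toFinite _)] at hcon
    obtain ⟨_, _, _, ⟨x, hx, rfl⟩, ⟨y, hy, rfl⟩, ⟨z, hz, rfl⟩, h1, h2, h3⟩ := hcon
    exact hC.three hchordal hT2 (hfib x hx y hy) (hfib x hx z hz) h1 h2 h3
  · have tw : ∀ {x y : Ω}, {g | IsTwin X x g} ≠ {g | IsTwin X y g} →
        X.neighborSet x ≠ X.neighborSet y := by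
      intro x y h1 h2
      apply h1
      ext g
      exact ⟨fun t => aux_twin h2 t, fun t => aux_twin h2.symm t⟩
    by_contra hcon
    push Not at hcon
    rw [Set.two_lt_ncard_iff (Set.toFinite _)] at hcon
    obtain ⟨_, _, _, ⟨x, hx, rfl⟩, ⟨y, hy, rfl⟩, ⟨z, hz, rfl⟩, h1, h2, h3⟩ := hcon
    exact hC.three hchordal hT2 (hfib x hx y hy) (hfib x hx z hz) (tw h1) (tw h2) (tw h3)
end
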